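/- arXiv:0911.3810 — 3 statements merged into one kernel-verified Lean document; each statement's English description precedes it below -/
import Mathlib

section
/- Let P_ℓ denote the path with ℓ edges and let k*(P_ℓ,2) be the smallest integer k for which Builder has a winning strategy in the deterministic P_ℓ-avoidance game with 2 colors and tree size restriction k. Then liminf_{ℓ→∞} k*(P_ℓ,2)/ℓ² ≥ 8/15; equivalently, for every ε > 0 there exists ℓ₀ such that k*(P_ℓ,2) ≥ (8/15 − ε)·ℓ² for all ℓ ≥ ℓ₀. -/
open SimpleGraph Filter Asymptotics
open scoped Classical

/-- A history of the game: the sequence of edges presented so far, together with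
the colors (elements of `Fin r`, representing the colors `1,…,r`) they received. -/
abbrev EdgeHistory (V : Type) (r : ℕ) := List (Sym2 V × Fin r)

/-- A Painter strategy on vertex type `V` with `r` colors: a function assigning a color
to every pair (history, new edge). -/
abbrev PainterStrategy (V : Type) (r : ℕ) := EdgeHistory V r → Sym2 V → Fin r

/-- Auxiliary function: run a Painter strategy on a list of presented edges,
extending the given history. -/
def runPainterAux {V : Type} {r : ℕ} (π : PainterStrategy V r) :
    EdgeHistory V r → List (Sym2 V) → EdgeHistory V r
  | h, [] => h
  | h, e :: es => runPainterAux π (h ++ [(e, π h e)]) es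

/-- The colored history obtained by coloring the edges of `l` successively
according to the Painter strategy `π`. -/
def runPainter {V : Type} {r : ℕ} (π : PainterStrategy V r) (l : List (Sym2 V)) :
    EdgeHistory V r :=
  runPainterAux π [] l

/-- `G` contains a copy of `F`, i.e. a subgraph isomorphic to `F`. -/
def IsCopy {α β : Type} (F : SimpleGraph α) (G : SimpleGraph β) : Prop :=
  ∃ f : α ↪ β, ∀ u v : α, F.Adj u v → G.Adj (f u) (f v)

/-- The graph formed by the edges of color `c` in the history `h`. -/
def colorGraph {V : Type} {r : ℕ} (h : EdgeHistory V r) (c : Fin r) : SimpleGraph V :=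
  SimpleGraph.fromEdgeSet {e | (e, c) ∈ h}

/-- The history `h` contains a monochromatic copy of `F`. -/
def HasMonoCopy {α V : Type} {r : ℕ} (F : SimpleGraph α) (h : EdgeHistory V r) : Prop :=
  ∃ c : Fin r, IsCopy F (colorGraph h c)

/-- The number of edges of `G` lying entirely within the vertex set `S`. -/
noncomputable def edgesWithin {V : Type} (G : SimpleGraph V) (S : Set V) : ℕ :=
  (G.edgeSet ∩ {e | ∀ v ∈ e, v ∈ S}).ncard

/-- `m(G) ≤ d`: every subgraph `H` of `G` with at least one vertex satisfies `e_H ≤ d · v_H`. -/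
def DensityLE {V : Type} (G : SimpleGraph V) (d : ℝ) : Prop :=
  ∀ S : Finset V, S.Nonempty → (edgesWithin G (↑S : Set V) : ℝ) ≤ d * (S.card : ℝ)

/-- `G` contains no cycle and every connected component of `G` has at most `k` edges
(equivalently, `G` is acyclic and contains no connected subgraph with more than `k` edges). -/
def TreeSizeLE {V : Type} (G : SimpleGraph V) (k : ℕ) : Prop :=
  G.IsAcyclic ∧ ∀ S : Set V, (G.induce S).Connected → edgesWithin G S ≤ k

/-- A legal sequence of moves for Builder: distinct non-loop edges. -/
def ValidEdgeSeq {V : Type} (l : List (Sym2 V)) : Prop :=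
  l.Nodup ∧ ∀ e ∈ l, ¬ e.IsDiag

/-- The (uncolored) board formed by a list of edges. -/
def boardOf {V : Type} (l : List (Sym2 V)) : SimpleGraph V :=
  SimpleGraph.fromEdgeSet {e | e ∈ l}

/-- Builder has a winning strategy in the deterministic `F`-avoidance game with `r` colors
and density restriction `d`. -/
def BuilderWinsDensity {α : Type} (F : SimpleGraph α) (r : ℕ) (d : ℝ) : Prop :=
  ∃ a : ℕ, ∀ π : PainterStrategy (Fin a) r, ∃ l : List (Sym2 (Fin a)),
    ValidEdgeSeq l ∧ (∀ i : ℕ, DensityLE (boardOf (l.take i)) d) ∧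
    HasMonoCopy F (runPainter π l)

/-- Builder has a winning strategy in the deterministic `F`-avoidance game with `r` colors
and tree size restriction `k`. -/
def BuilderWinsTree {α : Type} (F : SimpleGraph α) (r k : ℕ) : Prop :=
  ∃ a : ℕ, ∀ π : PainterStrategy (Fin a) r, ∃ l : List (Sym2 (Fin a)),
    ValidEdgeSeq l ∧ (∀ i : ℕ, TreeSizeLE (boardOf (l.take i)) k) ∧
    HasMonoCopy F (runPainter π l)

/-- The Painter strategy `π` on `a` vertices never creates a monochromatic copy of `F`
against any Builder play obeying the tree size restriction `k`. -/
def PainterAvoidsTree {α : Type} (F : SimpleGraph α) (r k a : ℕ)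
    (π : PainterStrategy (Fin a) r) : Prop :=
  ∀ l : List (Sym2 (Fin a)), ValidEdgeSeq l →
    (∀ i : ℕ, TreeSizeLE (boardOf (l.take i)) k) →
    ¬ HasMonoCopy F (runPainter π l)

/-- Painter has a winning strategy in the deterministic `F`-avoidance game with `r` colors
and tree size restriction `k`. -/
def PainterWinsTree {α : Type} (F : SimpleGraph α) (r k : ℕ) : Prop :=
  ∀ a : ℕ, ∃ π : PainterStrategy (Fin a) r, PainterAvoidsTree F r k a π

/-- A sequence of `N` distinct non-loop edges on `n` vertices. -/
def ValidSeqFun {n N : ℕ} (f : Fin N → Sym2 (Fin n)) : Prop :=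
  Function.Injective f ∧ ∀ i, ¬ (f i).IsDiag

/-- The probability (with respect to the uniformly random order in which the `N` distinct
edges of the random process on `n` vertices appear) of the event `P`. -/
noncomputable def onlineProb (n N : ℕ) (P : (Fin N → Sym2 (Fin n)) → Prop) : ℝ :=
  (Set.ncard {f : Fin N → Sym2 (Fin n) | ValidSeqFun f ∧ P f} : ℝ) /
  (Set.ncard {f : Fin N → Sym2 (Fin n) | ValidSeqFun f} : ℝ)

/-- Event: playing the online strategy `π` on the random edge sequence `f` produces
a monochromatic copy of `F`. -/
def OnlineMonoCopy {α : Type} (F : SimpleGraph α) {r n N : ℕ}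
    (π : PainterStrategy (Fin n) r) (f : Fin N → Sym2 (Fin n)) : Prop :=
  HasMonoCopy F (runPainter π (List.ofFn f))


/-! Proof -/

def NB {V : Type} (A : V → V → Prop) (f : ℕ → V) (n : ℕ) : Prop :=
  (∀ i, i < n → A (f i) (f (i+1))) ∧ ∀ i, i + 1 < n → f i ≠ f (i+2)

def LP {V : Type} (A : V → V → Prop) (u : V) (n : ℕ) : Prop :=
  ∃ f : ℕ → V, f 0 = u ∧ NB A f n

def Big {V : Type} (A : V → V → Prop) (n : ℕ) (e : Sym2 V) : Prop :=
  ∃ u v, e = s(u,v) ∧ ∃ i j, i + j = n ∧ LP A u i ∧ LP A v j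

lemma Big.elim {V : Type} {A : V → V → Prop} {n : ℕ} {u v : V} (h : Big A n s(u,v)) :
    ∃ i j, i + j = n ∧ LP A u i ∧ LP A v j := by
  obtain ⟨a, b, hab, i, j, hij, h1, h2⟩ := h
  rw [Sym2.eq_iff] at hab
  rcases hab with ⟨rfl, rfl⟩ | ⟨rfl, rfl⟩
  · exact ⟨i, j, hij, h1, h2⟩
  · exact ⟨j, i, by omega, h2, h1⟩

def side {V : Type} (G : SimpleGraph V) (x u : V) : Set V :=
  {y | ∃ p : G.Walk u y, p.IsPath ∧ x ∉ p.support}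

noncomputable def bN {V : Type} (G : SimpleGraph V) (x u : V) : ℕ := (side G x u).ncard

lemma side_disj {V : Type} {G : SimpleGraph V} (hG : G.IsAcyclic) {u w₁ w₂ : V}
    (h1 : G.Adj u w₁) (h2 : G.Adj u w₂) (hne : w₁ ≠ w₂) :
    Disjoint (side G u w₁) (side G u w₂) := by
  rw [Set.disjoint_left]
  rintro y ⟨p, hp, hup⟩ ⟨q, hq, huq⟩
  have e := (hG.subsingleton_path u y).elim ⟨Walk.cons h1 p, hp.cons hup⟩ ⟨Walk.cons h2 q, hq.cons huq⟩
  have e2 := congrArg (fun z : G.Path u y => z.1.getVert 1) e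
  simp at e2
  exact hne e2

lemma side_sub {V : Type} {G : SimpleGraph V} (hG : G.IsAcyclic) {x u w : V}
    (h1 : G.Adj x u) (h2 : G.Adj u w) (hne : w ≠ x) :
    side G u w ⊆ side G x u := by
  rintro y ⟨p, hp, hup⟩
  refine ⟨Walk.cons h2 p, hp.cons hup, ?_⟩
  intro hx
  rw [Walk.support_cons, List.mem_cons] at hx
  rcases hx with hx | hx
  · exact h1.ne hx
  · have hq : (p.takeUntil x hx).IsPath := hp.takeUntil hx
    have huq : u ∉ (p.takeUntil x hx).support := fun h => hup (Walk.support_takeUntil_subset_support _ hx h)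
    have hxx : x ∈ side G u x := ⟨Walk.nil, by simp, by simpa using h1.ne'⟩
    have hxw : x ∈ side G u w := ⟨_, hq, huq⟩
    exact Set.disjoint_left.1 (side_disj hG h2 h1.symm hne) hxw hxx

lemma bN_rec {V : Type} [Finite V] {G : SimpleGraph V} (hG : G.IsAcyclic) {x u : V}
    (h1 : G.Adj x u) (T : Finset V) (hT : ∀ w ∈ T, G.Adj u w ∧ w ≠ x) :
    1 + ∑ w ∈ T, bN G u w ≤ bN G x u := by
  have key : ∀ T : Finset V, (∀ w ∈ T, G.Adj u w ∧ w ≠ x) →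
      (∑ w ∈ T, bN G u w) = (⋃ w ∈ T, side G u w).ncard := by
    intro T
    induction T using Finset.induction_on with
    | empty => simp
    | insert a T ha ih =>
      intro hT
      rw [Finset.sum_insert ha, ih (fun w hw => hT w (Finset.mem_insert_of_mem hw)),
        Finset.set_biUnion_insert, Set.ncard_union_eq _ (Set.toFinite _) (Set.toFinite _)]
      · rfl
      · rw [Set.disjoint_iUnion₂_right]
        intro w hw
        exact side_disj hG (hT a (Finset.mem_insert_self _ _)).1
          (hT w (Finset.mem_insert_of_mem hw)).1 (fun h => ha (h ▸ hw))
  rw [key T hT, add_comm]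
  have hu : u ∉ (⋃ w ∈ T, side G u w) := by
    simp only [Set.mem_iUnion, not_exists]
    rintro w hw ⟨p, hp, hup⟩
    exact hup p.end_mem_support
  rw [← Set.ncard_insert_of_notMem hu (Set.toFinite _)]
  apply Set.ncard_le_ncard _ (Set.toFinite _)
  apply Set.insert_subset
  · exact ⟨Walk.nil, by simp, by simpa using h1.ne⟩
  · apply Set.iUnion₂_subset
    intro w hw
    exact side_sub hG h1 (hT w hw).1 (hT w hw).2

/-- total size hanging at `x` away from `p` and `q` -/
noncomputable def hh {V : Type} [Fintype V] (G : SimpleGraph V) (p x q : V) : ℕ :=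
  ∑ w ∈ Finset.univ.filter (fun w => G.Adj x w ∧ w ≠ p ∧ w ≠ q), bN G x w

lemma hh_one {V : Type} [Fintype V] {G : SimpleGraph V} {p x q y : V}
    (h : G.Adj x y) (hp : y ≠ p) (hq : y ≠ q) : bN G x y ≤ hh G p x q := by
  unfold hh
  exact Finset.single_le_sum (f := fun w => bN G x w) (fun _ _ => Nat.zero_le _) (by simp [h, hp, hq])

lemma hh_two {V : Type} [Fintype V] {G : SimpleGraph V} {p x q y z : V}
    (h : G.Adj x y) (hp : y ≠ p) (hq : y ≠ q) (h' : G.Adj x z) (hp' : z ≠ p) (hq' : z ≠ q)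
    (hne : y ≠ z) : bN G x y + bN G x z ≤ hh G p x q := by
  unfold hh
  rw [← Finset.sum_pair (f := fun w => bN G x w) hne]
  apply Finset.sum_le_sum_of_subset
  intro w hw
  simp at hw
  rcases hw with rfl | rfl <;> simp [*]

lemma bN_chain_step {V : Type} [Fintype V] {G : SimpleGraph V} (hG : G.IsAcyclic) {p x q : V}
    (h1 : G.Adj p x) (h2 : G.Adj x q) (hne : p ≠ q) :
    1 + hh G p x q + bN G x q ≤ bN G p x := by
  have := bN_rec hG h1 (insert q (Finset.univ.filter (fun w => G.Adj x w ∧ w ≠ p ∧ w ≠ q))) (by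
    intro w hw
    simp at hw
    rcases hw with rfl | hw
    · exact ⟨h2, hne.symm⟩
    · exact ⟨hw.1, hw.2.1⟩)
  rw [Finset.sum_insert (by simp)] at this
  unfold hh
  omega

lemma bN_chain {V : Type} [Fintype V] {G : SimpleGraph V} (hG : G.IsAcyclic) (n : ℕ) :
    ∀ f : ℕ → V, NB G.Adj f (n+1) →
    ∑ j ∈ Finset.range n, (1 + hh G (f j) (f (j+1)) (f (j+2))) ≤ bN G (f 0) (f 1) := by
  induction n with
  | zero => intro f _; simp
  | succ n ih =>
    intro f hf
    have h : ∑ j ∈ Finset.range n, (1 + hh G (f (j+1)) (f (j+1+1)) (f (j+1+2))) ≤ bN G (f 1) (f 2) :=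
      ih (fun i => f (i+1)) ⟨fun i hi => hf.1 (i+1) (by omega), fun i hi => hf.2 (i+1) (by omega)⟩
    rw [Finset.sum_range_succ']
    have h2 := bN_chain_step hG (hf.1 0 (by omega)) (hf.1 1 (by omega)) (hf.2 0 (by omega))
    simp only [zero_add] at *
    norm_num at *
    omega

lemma bN_pos {V : Type} [Finite V] {G : SimpleGraph V} (hG : G.IsAcyclic) {x u : V}
    (h1 : G.Adj x u) : 1 ≤ bN G x u := by
  have := bN_rec hG h1 ∅ (by simp)
  simpa using this

lemma bN_one {V : Type} [Finite V] {G : SimpleGraph V} (hG : G.IsAcyclic) {x u w : V}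
    (h1 : G.Adj x u) (h2 : G.Adj u w) (h : w ≠ x) : 1 + bN G u w ≤ bN G x u := by
  have := bN_rec hG h1 {w} (by simp [h2, h])
  simpa using this

lemma bN_two {V : Type} [Finite V] {G : SimpleGraph V} (hG : G.IsAcyclic) {x u w z : V}
    (h1 : G.Adj x u) (h2 : G.Adj u w) (h : w ≠ x) (h2' : G.Adj u z) (h' : z ≠ x) (hne : w ≠ z) :
    1 + (bN G u w + bN G u z) ≤ bN G x u := by
  have := bN_rec hG h1 {w, z} (by simp [h2, h, h2', h'])
  rwa [Finset.sum_pair hne] at this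

lemma seq_sum (n : ℕ) : ∀ (g : ℕ → ℕ) (S : ℕ → Prop), S 0 →
    (∀ j, S j ∨ S (j+1)) → (∀ j, j + 1 < n → S j → 4 ≤ g j + g (j+1)) →
    (∀ j, j + 2 < n → S j → S (j+1) → 5 ≤ g j + g (j+1) + g (j+2)) →
    5 * n ≤ 3 * ∑ j ∈ Finset.range n, g j + 5 := by
  induction n using Nat.strong_induction_on with
  | _ n ih =>
  intro g S h0 hF h2 h3
  by_cases hn : n < 2
  · omega
  obtain ⟨m, rfl⟩ : ∃ m, n = m + 2 := ⟨n - 2, by omega⟩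
  by_cases hS2 : S 2
  · have := ih m (by omega) (fun j => g (j+2)) (fun j => S (j+2)) hS2 (fun j => hF (j+2))
      (fun j hj => h2 (j+2) (by omega)) (fun j hj => h3 (j+2) (by omega))
    rw [Finset.sum_range_succ', Finset.sum_range_succ']
    have := h2 0 (by omega) h0
    simp only [add_assoc, zero_add] at *
    norm_num at *
    omega
  · have hS1 : S 1 := (hF 1).resolve_right hS2
    have hS3 : S 3 := (hF 2).resolve_left hS2
    by_cases hm : m = 0
    · subst hm
      have := h2 0 (by omega) h0
      simp [Finset.sum_range_succ] at *
      omega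
    obtain ⟨k, rfl⟩ : ∃ k, m = k + 1 := ⟨m - 1, by omega⟩
    have := ih k (by omega) (fun j => g (j+3)) (fun j => S (j+3)) hS3 (fun j => hF (j+3))
      (fun j hj => h2 (j+3) (by omega)) (fun j hj => h3 (j+3) (by omega))
    have h5 := h3 0 (by omega) h0 hS1
    rw [Finset.sum_range_succ', Finset.sum_range_succ', Finset.sum_range_succ']
    simp only [add_assoc, zero_add] at *
    norm_num at *
    omega

lemma seq_sum' (n : ℕ) (g : ℕ → ℕ) (S : ℕ → Prop)
    (hF : ∀ j, j + 2 < n → S j ∨ S (j+1)) (h2 : ∀ j, j + 1 < n → S j → 4 ≤ g j + g (j+1))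
    (h3 : ∀ j, j + 2 < n → S j → S (j+1) → 5 ≤ g j + g (j+1) + g (j+2)) :
    5 * n ≤ 3 * ∑ j ∈ Finset.range n, g j + 10 := by
  have hF' : ∀ j, (j + 1 < n → S j) ∨ (j + 1 + 1 < n → S (j+1)) := by
    intro j
    by_cases h : j + 2 < n
    · rcases hF j h with h | h
      · exact Or.inl fun _ => h
      · exact Or.inr fun _ => h
    · exact Or.inr fun h' => absurd h' h
  by_cases h0 : (0 + 1 < n → S 0)
  · have := seq_sum n g (fun j => j + 1 < n → S j) h0 hF'
      (fun j hj hS => h2 j hj (hS hj)) (fun j hj hS hS' => h3 j hj (hS (by omega)) (hS' (by omega)))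
    omega
  · have h1 := (hF' 0).resolve_left h0
    push Not at h0
    obtain ⟨m, rfl⟩ : ∃ m, n = m + 1 := ⟨n - 1, by omega⟩
    have := seq_sum m (fun j => g (j+1)) (fun j => j + 1 + 1 < m + 1 → S (j+1)) h1 (fun j => hF' (j+1))
      (fun j hj hS => h2 (j+1) (by omega) (hS (by omega)))
      (fun j hj hS hS' => h3 (j+1) (by omega) (hS (by omega)) (hS' (by omega)))
    rw [Finset.sum_range_succ']
    omega

def bef {V : Type} (R : SimpleGraph V) (τ : Sym2 V → ℕ) (t : ℕ) (x y : V) : Prop :=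
  R.Adj x y ∧ τ s(x,y) < t

structure Model {V : Type} (G R B : SimpleGraph V) (τ : Sym2 V → ℕ) (L : ℕ) : Prop where
  ac : G.IsAcyclic
  hR : ∀ {x y}, R.Adj x y → G.Adj x y
  hB : ∀ {x y}, B.Adj x y → G.Adj x y
  disj : ∀ {x y}, R.Adj x y → B.Adj x y → False
  inj : ∀ {x y x' y'}, G.Adj x y → G.Adj x' y' → τ s(x,y) = τ s(x',y') → s(x,y) = s(x',y')
  red : ∀ {x y}, R.Adj x y → ¬ Big (bef R τ (τ s(x,y))) 1 s(x,y) ∨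
    (Big (bef B τ (τ s(x,y))) 3 s(x,y) ∧ ¬ Big (bef R τ (τ s(x,y))) (L-1) s(x,y))
  blue : ∀ {x y}, B.Adj x y → Big (bef R τ (τ s(x,y))) 1 s(x,y) ∧
    (¬ Big (bef B τ (τ s(x,y))) 3 s(x,y) ∨ Big (bef R τ (τ s(x,y))) (L-1) s(x,y))

lemma LP.mono {V : Type} {A A' : V → V → Prop} (hA : ∀ x y, A x y → A' x y) {u : V} {n : ℕ}
    (h : LP A u n) : LP A' u n := by
  obtain ⟨f, h0, h1, h2⟩ := h
  exact ⟨f, h0, fun i hi => hA _ _ (h1 i hi), h2⟩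

lemma LP.one {V : Type} {A : V → V → Prop} {u : V} (h : LP A u 1) : ∃ y, A u y := by
  obtain ⟨f, rfl, h1, h2⟩ := h
  exact ⟨_, h1 0 (by omega)⟩

lemma LP.two {V : Type} {A : V → V → Prop} {u : V} (h : LP A u 2) :
    ∃ y z, A u y ∧ A y z ∧ u ≠ z := by
  obtain ⟨f, rfl, h1, h2⟩ := h
  exact ⟨_, _, h1 0 (by omega), h1 1 (by omega), h2 0 (by omega)⟩

lemma LP.three {V : Type} {A : V → V → Prop} {u : V} (h : LP A u 3) :
    ∃ y z w, A u y ∧ A y z ∧ A z w ∧ u ≠ z ∧ y ≠ w := by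
  obtain ⟨f, rfl, h1, h2⟩ := h
  exact ⟨_, _, _, h1 0 (by omega), h1 1 (by omega), h1 2 (by omega), h2 0 (by omega), h2 1 (by omega)⟩

lemma hh_comm {V : Type} [Fintype V] (G : SimpleGraph V) (p x q : V) : hh G p x q = hh G q x p := by
  unfold hh
  congr 1
  ext w
  simp
  tauto

namespace Model
variable {V : Type} [Fintype V] {G R B : SimpleGraph V} {τ : Sym2 V → ℕ} {L : ℕ}

lemma touch (M : Model G R B τ L) {x y : V} (h : B.Adj x y) :
    ∃ z, (R.Adj x z ∧ τ s(x,z) < τ s(x,y)) ∨ (R.Adj y z ∧ τ s(y,z) < τ s(x,y)) := by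
  obtain ⟨i, j, hij, h1, h2⟩ := (M.blue h).1.elim
  obtain ⟨rfl, rfl⟩ | ⟨rfl, rfl⟩ : (i = 1 ∧ j = 0) ∨ (i = 0 ∧ j = 1) := by omega
  · obtain ⟨z, hz⟩ := h1.one
    exact ⟨z, Or.inl hz⟩
  · obtain ⟨z, hz⟩ := h2.one
    exact ⟨z, Or.inr hz⟩

lemma rb_ne (M : Model G R B τ L) {x y z : V} (h1 : R.Adj x y) (h2 : B.Adj x z) : z ≠ y := by
  rintro rfl
  exact M.disj h1 h2

lemma rb_ne' (M : Model G R B τ L) {x y z : V} (h1 : R.Adj y x) (h2 : B.Adj x z) : z ≠ y :=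
  M.rb_ne h1.symm h2

lemma b2 (M : Model G R B τ L) {x y z : V} (h1 : B.Adj x y) (h2 : B.Adj y z) (hne : x ≠ z) :
    3 ≤ bN G x y := by
  obtain ⟨w, ⟨hw, -⟩ | ⟨hw, -⟩⟩ := M.touch h2
  · have := bN_two M.ac (M.hB h1) (M.hB h2) hne.symm (M.hR hw) (M.rb_ne hw h1.symm).symm (M.rb_ne hw h2)
    have := bN_pos M.ac (M.hB h2)
    have := bN_pos M.ac (M.hR hw)
    omega
  · have := bN_one M.ac (M.hB h1) (M.hB h2) hne.symm
    have := bN_one M.ac (M.hB h2) (M.hR hw) (M.rb_ne hw h2.symm).symm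
    have := bN_pos M.ac (M.hR hw)
    omega

lemma hB1 (M : Model G R B τ L) {p x q : V} (h1 : R.Adj p x) (h2 : R.Adj x q) {t : ℕ}
    (h : LP (bef B τ t) x 1) : 1 ≤ hh G p x q := by
  obtain ⟨y, hy, -⟩ := h.one
  exact (bN_pos M.ac (M.hB hy)).trans (hh_one (M.hB hy) (M.rb_ne' h1 hy) (M.rb_ne h2 hy))

lemma hB2 (M : Model G R B τ L) {p x q : V} (h1 : R.Adj p x) (h2 : R.Adj x q) {t : ℕ}
    (h : LP (bef B τ t) x 2) : 3 ≤ hh G p x q := by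
  obtain ⟨y, z, ⟨hy, -⟩, ⟨hz, -⟩, hne⟩ := h.two
  exact (M.b2 hy hz hne).trans (hh_one (M.hB hy) (M.rb_ne' h1 hy) (M.rb_ne h2 hy))

lemma hB3 (M : Model G R B τ L) {p x q : V} (h1 : R.Adj p x) (h2 : R.Adj x q) {t : ℕ}
    (h : LP (bef B τ t) x 3) : 4 ≤ hh G p x q := by
  obtain ⟨y, z, w, ⟨hy, -⟩, ⟨hz, -⟩, ⟨hw, -⟩, hne, hne'⟩ := h.three
  have := hh_one (M.hB hy) (M.rb_ne' h1 hy) (M.rb_ne h2 hy)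
  have := M.b2 hz hw hne'
  have := bN_one M.ac (M.hB hy) (M.hB hz) hne.symm
  omega

lemma cases3 {i j : ℕ} (h : i + j = 3) : (i = 0 ∧ j = 3) ∨ (i = 1 ∧ j = 2) ∨ (i = 2 ∧ j = 1) ∨ (i = 3 ∧ j = 0) := by
  omega

lemma pair (M : Model G R B τ L) {p x y q : V} (h1 : R.Adj p x) (h2 : R.Adj x y) (h3 : R.Adj y q)
    {t : ℕ} (hS : Big (bef B τ t) 3 s(x,y)) : 4 ≤ hh G p x y + hh G x y q := by
  obtain ⟨i, j, hij, ha, hb⟩ := hS.elim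
  rcases cases3 hij with ⟨rfl, rfl⟩ | ⟨rfl, rfl⟩ | ⟨rfl, rfl⟩ | ⟨rfl, rfl⟩
  · have := M.hB3 h2 h3 hb; omega
  · have := M.hB2 h2 h3 hb; have := M.hB1 h1 h2 ha; omega
  · have := M.hB1 h2 h3 hb; have := M.hB2 h1 h2 ha; omega
  · have := M.hB3 h1 h2 ha; omega

lemma triple_aux (M : Model G R B τ L) {p x w y q : V} (h1 : R.Adj p x) (h2 : R.Adj x w)
    (h3 : R.Adj w y) (h4 : R.Adj y q) (ht : τ s(x,w) < τ s(w,y))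
    (hS : Big (bef B τ (τ s(x,w))) 3 s(x,w)) (hS' : Big (bef B τ (τ s(w,y))) 3 s(w,y)) :
    5 ≤ hh G p x w + hh G x w y + hh G w y q := by
  have hp := M.pair h2 h3 h4 hS'
  -- a red edge at w before time τ s(x,w)
  have hz : ∀ z, R.Adj w z → τ s(w,z) < τ s(x,w) → z ≠ x ∧ z ≠ y := by
    intro z hz hlt
    constructor
    · rintro rfl; rw [Sym2.eq_swap] at hlt; omega
    · rintro rfl; omega
  obtain ⟨i, j, hij, ha, hb⟩ := hS.elim
  rcases cases3 hij with ⟨rfl, rfl⟩ | ⟨rfl, rfl⟩ | ⟨rfl, rfl⟩ | ⟨rfl, rfl⟩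
  · obtain ⟨y1, y2, y3, ⟨hy, hyt⟩, ⟨hz2, -⟩, ⟨hw, -⟩, hne, hne'⟩ := hb.three
    have h3' := M.b2 hz2 hw hne'
    obtain ⟨z, ⟨hr, hrt⟩ | ⟨hr, hrt⟩⟩ := M.touch hy
    · obtain ⟨hzx, hzy⟩ := hz z hr (by omega)
      have := hh_two (M.hB hy) (M.rb_ne' h2 hy) (M.rb_ne h3 hy) (M.hR hr) hzx hzy (M.rb_ne hr hy)
      have := bN_pos M.ac (M.hR hr)
      have := bN_one M.ac (M.hB hy) (M.hB hz2) hne.symm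
      omega
    · have := hh_one (M.hB hy) (M.rb_ne' h2 hy) (M.rb_ne h3 hy)
      have := bN_two M.ac (M.hB hy) (M.hB hz2) hne.symm (M.hR hr) (M.rb_ne hr hy.symm).symm (M.rb_ne hr hz2)
      have := bN_pos M.ac (M.hR hr)
      omega
  · have hx := M.hB1 h1 h2 ha
    have hw := M.hB2 h2 h3 hb
    obtain ⟨i, j, hij, ha, hb⟩ := hS'.elim
    by_cases hj : j = 0
    · obtain rfl : i = 3 := by omega
      have := M.hB3 h2 h3 ha
      omega
    · have : LP (bef B τ (τ s(w,y))) y 1 := by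
        obtain ⟨f, h0, h1, h2⟩ := hb
        exact ⟨f, h0, fun i hi => h1 i (by omega), fun i hi => by omega⟩
      have := M.hB1 h3 h4 this
      omega
  · have hx := M.hB2 h1 h2 ha
    obtain ⟨y1, hy, hyt⟩ := hb.one
    obtain ⟨z, ⟨hr, hrt⟩ | ⟨hr, hrt⟩⟩ := M.touch hy
    · obtain ⟨hzx, hzy⟩ := hz z hr (by omega)
      have := hh_two (M.hB hy) (M.rb_ne' h2 hy) (M.rb_ne h3 hy) (M.hR hr) hzx hzy (M.rb_ne hr hy)
      have := bN_pos M.ac (M.hR hr)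
      have := bN_pos M.ac (M.hB hy)
      omega
    · have := hh_one (M.hB hy) (M.rb_ne' h2 hy) (M.rb_ne h3 hy)
      have := bN_one M.ac (M.hB hy) (M.hR hr) (M.rb_ne hr hy.symm).symm
      have := bN_pos M.ac (M.hR hr)
      omega
  · have := M.hB3 h1 h2 ha
    omega

lemma triple (M : Model G R B τ L) {p x w y q : V} (h1 : R.Adj p x) (h2 : R.Adj x w)
    (h3 : R.Adj w y) (h4 : R.Adj y q) (hne : x ≠ y)
    (hS : Big (bef B τ (τ s(x,w))) 3 s(x,w)) (hS' : Big (bef B τ (τ s(w,y))) 3 s(w,y)) :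
    5 ≤ hh G p x w + hh G x w y + hh G w y q := by
  rcases lt_trichotomy (τ s(x,w)) (τ s(w,y)) with h | h | h
  · exact M.triple_aux h1 h2 h3 h4 h hS hS'
  · have := M.inj (M.hR h2) (M.hR h3) h
    rw [Sym2.eq_swap, Sym2.congr_right] at this
    exact absurd this hne
  · have := M.triple_aux (p := q) (x := y) (w := w) (y := x) (q := p) h4.symm h3.symm h2.symm h1.symm
      (by rw [Sym2.eq_swap (a := y), Sym2.eq_swap (a := w) (b := x)]; exact h) (by rwa [Sym2.eq_swap]) (by rwa [Sym2.eq_swap])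
    rw [hh_comm G q, hh_comm G y w x, hh_comm G w x p] at this
    omega

/-- of two adjacent red edges, the later one is strong -/
lemma red_two (M : Model G R B τ L) {x w y : V} (h2 : R.Adj x w) (h3 : R.Adj w y) (hne : x ≠ y) :
    Big (bef B τ (τ s(x,w))) 3 s(x,w) ∨ Big (bef B τ (τ s(w,y))) 3 s(w,y) := by
  have key : ∀ x y : V, R.Adj x w → R.Adj w y → τ s(x,w) < τ s(w,y) → Big (bef B τ (τ s(w,y))) 3 s(w,y) := by
    intro x y h2 h3 h
    refine ((M.red h3).resolve_left ?_).1
    rw [not_not]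
    refine ⟨w, y, rfl, 1, 0, rfl, ⟨fun i => if i = 0 then w else x, by simp, ?_, ?_⟩, ⟨fun _ => y, rfl, ?_, ?_⟩⟩
    · intro i hi
      obtain rfl : i = 0 := by omega
      simp only [bef]
      refine ⟨by simpa using h2.symm, ?_⟩
      rw [Sym2.eq_swap] at h
      simpa using h
    all_goals intro i hi; omega
  rcases lt_trichotomy (τ s(x,w)) (τ s(w,y)) with h | h | h
  · exact Or.inr (key x y h2 h3 h)
  · have := M.inj (M.hR h2) (M.hR h3) h
    rw [Sym2.eq_swap, Sym2.congr_right] at this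
    exact absurd this hne
  · left
    have := key y x h3.symm h2.symm (by rw [Sym2.eq_swap (a := y), Sym2.eq_swap (a := w) (b := x)]; exact h)
    rwa [Sym2.eq_swap] at this

lemma red_path (M : Model G R B τ L) (f : ℕ → V) (n : ℕ) (hf : NB R.Adj f (n+1)) :
    8 * n ≤ 3 * bN G (f 0) (f 1) + 10 := by
  have h1 := bN_chain M.ac n f ⟨fun i hi => M.hR (hf.1 i hi), hf.2⟩
  have h2 := seq_sum' n (fun j => hh G (f j) (f (j+1)) (f (j+2)))
    (fun j => Big (bef B τ (τ s(f (j+1),f (j+2)))) 3 s(f (j+1),f (j+2)))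
    (fun j hj => M.red_two (hf.1 (j+1) (by omega)) (hf.1 (j+2) (by omega)) (hf.2 (j+1) (by omega)))
    (fun j hj hS => M.pair (hf.1 j (by omega)) (hf.1 (j+1) (by omega)) (hf.1 (j+2) (by omega)) hS)
    (fun j hj hS hS' => M.triple (hf.1 j (by omega)) (hf.1 (j+1) (by omega)) (hf.1 (j+2) (by omega))
      (hf.1 (j+3) (by omega)) (hf.2 (j+1) (by omega)) hS hS')
  rw [Finset.sum_add_distrib] at h1
  simp at h1
  omega

lemma red_hang (M : Model G R B τ L) {p x q : V} (h1 : B.Adj p x) (h2 : B.Adj x q) {t i : ℕ}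
    (h : LP (bef R τ t) x i) : 8 * i ≤ 3 * hh G p x q + 18 := by
  obtain ⟨f, rfl, hf1, hf2⟩ := h
  by_cases hi : i = 0
  · omega
  obtain ⟨n, rfl⟩ : ∃ n, i = n + 1 := ⟨i - 1, by omega⟩
  have := M.red_path f n ⟨fun i hi => (hf1 i hi).1, hf2⟩
  have h01 := (hf1 0 (by omega)).1
  have := hh_one (p := p) (q := q) (M.hR h01) (M.rb_ne h01 h1.symm).symm (M.rb_ne h01 h2).symm
  simp only [zero_add] at *
  omega

/-- the last edge of an injective path -/
lemma last_edge (M : Model G R B τ L) (C : SimpleGraph V) (hC : ∀ x y, C.Adj x y → G.Adj x y)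
    (f : ℕ → V) (n : ℕ) (hadj : ∀ i, i < n → C.Adj (f i) (f (i+1)))
    (hinj : ∀ i j, i ≤ n → j ≤ n → f i = f j → i = j) (hn : 0 < n) :
    ∃ m, m < n ∧ Big (bef C τ (τ s(f m, f (m+1)))) (n-1) s(f m, f (m+1)) := by
  obtain ⟨m, hm, hmax⟩ := Finset.exists_max_image (Finset.range n) (fun i => τ s(f i, f (i+1)))
    ⟨0, by simpa using hn⟩
  simp only [Finset.mem_range] at hm hmax
  have hlt : ∀ i, i < n → i ≠ m → τ s(f i, f (i+1)) < τ s(f m, f (m+1)) := by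
    intro i hi hne
    refine lt_of_le_of_ne (hmax i hi) fun h => ?_
    have := M.inj (hC _ _ (hadj i hi)) (hC _ _ (hadj m hm)) h
    rw [Sym2.eq_iff] at this
    rcases this with ⟨h, -⟩ | ⟨h, h'⟩
    · exact hne (hinj _ _ (by omega) (by omega) h)
    · have := hinj _ _ (by omega) (by omega) h
      have := hinj _ _ (by omega) (by omega) h'
      omega
  refine ⟨m, hm, f m, f (m+1), rfl, m, n - 1 - m, by omega, ⟨fun i => f (m - i), rfl, ?_, ?_⟩,
    ⟨fun i => f (m + 1 + i), rfl, ?_, ?_⟩⟩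
  · intro i hi
    have e : m - i = m - (i+1) + 1 := by omega
    have h1 := hadj (m - (i+1)) (by omega)
    have h2 := hlt (m - (i+1)) (by omega) (by omega)
    rw [← e] at h1 h2
    exact ⟨h1.symm, by rwa [Sym2.eq_swap]⟩
  · intro i hi h
    have := hinj _ _ (by omega) (by omega) h
    omega
  · intro i hi
    exact ⟨hadj (m+1+i) (by omega), hlt (m+1+i) (by omega) (by omega)⟩
  · intro i hi h
    have := hinj _ _ (by omega) (by omega) h
    omega

lemma no_red (M : Model G R B τ L) (hL : 2 ≤ L) (f : ℕ → V)
    (hadj : ∀ i, i < L → R.Adj (f i) (f (i+1)))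
    (hinj : ∀ i j, i ≤ L → j ≤ L → f i = f j → i = j) : False := by
  obtain ⟨m, hm, hb⟩ := M.last_edge R (fun _ _ => M.hR) f L hadj hinj (by omega)
  rcases M.red (hadj m hm) with h | h
  · apply h
    obtain ⟨i, j, hij, ⟨g, hg0, hg⟩, ⟨g', hg0', hg'⟩⟩ := hb.elim
    by_cases hi : 0 < i
    · exact ⟨_, _, rfl, 1, 0, rfl, ⟨g, hg0, fun i hi => hg.1 i (by omega), fun i hi => by omega⟩,
        ⟨g', hg0', fun i hi => by omega, fun i hi => by omega⟩⟩
    · exact ⟨_, _, rfl, 0, 1, rfl, ⟨g, hg0, fun i hi => by omega, fun i hi => by omega⟩,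
        ⟨g', hg0', fun i hi => hg'.1 i (by omega), fun i hi => by omega⟩⟩
  · exact h.2 hb

lemma blue_block (M : Model G R B τ L) (f : ℕ → V)
    (hadj : ∀ i, i < L → B.Adj (f i) (f (i+1)))
    (hinj : ∀ i j, i ≤ L → j ≤ L → f i = f j → i = j) (s : ℕ) (hs : s + 6 ≤ L) :
    8 * (L - 1) ≤ 3 * ∑ j ∈ Finset.range 5, hh G (f (s+j)) (f (s+j+1)) (f (s+j+2)) + 36 := by
  obtain ⟨m, hm, hb⟩ := M.last_edge B (fun _ _ => M.hB) (fun i => f (s+1+i)) 4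
    (fun i hi => hadj (s+1+i) (by omega))
    (fun i j hi hj h => by have := hinj _ _ (by omega) (by omega) h; omega) (by omega)
  have hbl := M.blue (hadj (s+1+m) (by omega))
  have hst := hbl.2.resolve_left (not_not.2 hb)
  obtain ⟨i, j, hij, ha, hb⟩ := hst.elim
  have e1 := M.red_hang (hadj (s+m) (by omega)) (q := f (s+1+m+1)) (x := f (s+m+1)) (i := i)
    (by have := hadj (s+1+m) (by omega); rwa [show s+1+m = s+m+1 by omega] at this ⊢)
    (by rwa [show s+1+m = s+m+1 by omega] at ha)
  have e2 := M.red_hang (hadj (s+1+m) (by omega)) (hadj (s+1+m+1) (by omega)) hb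
  have e3 : hh G (f (s+m)) (f (s+m+1)) (f (s+m+2)) + hh G (f (s+(m+1))) (f (s+(m+1)+1)) (f (s+(m+1)+2))
      ≤ ∑ j ∈ Finset.range 5, hh G (f (s+j)) (f (s+j+1)) (f (s+j+2)) := by
    rw [← Finset.sum_pair (f := fun j => hh G (f (s+j)) (f (s+j+1)) (f (s+j+2))) (show m ≠ m+1 by omega)]
    apply Finset.sum_le_sum_of_subset
    intro w hw
    simp at hw ⊢
    omega
  rw [show s+1+m+1 = s+m+2 by omega] at e1
  rw [show s+1+m+1 = s+(m+1)+1 by omega, show s+(m+1)+1+1 = s+(m+1)+2 by omega,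
    show s+1+m = s+(m+1) by omega] at e2
  omega

lemma blue_total (M : Model G R B τ L) (hL : 1 ≤ L) (f : ℕ → V)
    (hadj : ∀ i, i < L → B.Adj (f i) (f (i+1)))
    (hinj : ∀ i j, i ≤ L → j ≤ L → f i = f j → i = j) :
    ((L - 1) / 5) * (8 * (L - 1) - 36) ≤ 3 * bN G (f 0) (f 1) := by
  have h1 := bN_chain M.ac (L-1) f ⟨fun i hi => M.hB (hadj i (by omega)), fun i hi h => by
    have := hinj _ _ (by omega) (by omega) h; omega⟩
  have key : ∀ m, 5 * m ≤ L - 1 → m * (8 * (L - 1) - 36) ≤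
      3 * ∑ j ∈ Finset.range (5 * m), (1 + hh G (f j) (f (j+1)) (f (j+2))) := by
    intro m
    induction m with
    | zero => simp
    | succ m ih =>
      intro hm
      have h2 := ih (by omega)
      have h3 := M.blue_block f hadj hinj (5*m) (by omega)
      rw [show 5 * (m+1) = 5 * m + 5 by ring, Finset.sum_range_add _ (5*m) 5, Finset.sum_add_distrib (s := Finset.range 5)]
      rw [add_mul]
      omega
  have h2 := key ((L-1)/5) (by omega)
  have h3 : ∑ j ∈ Finset.range (5 * ((L-1)/5)), (1 + hh G (f j) (f (j+1)) (f (j+2))) ≤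
      ∑ j ∈ Finset.range (L-1), (1 + hh G (f j) (f (j+1)) (f (j+2))) := by
    apply Finset.sum_le_sum_of_subset
    intro w hw
    simp at hw ⊢
    omega
  omega

end Model

lemma runAux_append {V : Type} {r : ℕ} (π : PainterStrategy V r) (l : List (Sym2 V)) (e : Sym2 V) :
    ∀ h : EdgeHistory V r, runPainterAux π h (l ++ [e]) =
      runPainterAux π h l ++ [(e, π (runPainterAux π h l) e)] := by
  induction l with
  | nil => intro h; rfl
  | cons a l ih => intro h; exact ih _

lemma mem_run {V : Type} {r : ℕ} (π : PainterStrategy V r) (l : List (Sym2 V)) (hl : l.Nodup)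
    (e : Sym2 V) (c : Fin r) :
    (e, c) ∈ runPainter π l ↔ e ∈ l ∧ c = π (runPainter π (l.take (l.idxOf e))) e := by
  induction l using List.reverseRecOn with
  | nil => simp [runPainter, runPainterAux]
  | append_singleton l a ih =>
    have hl' : l.Nodup ∧ a ∉ l := by
      rw [List.nodup_append] at hl
      refine ⟨hl.1, fun h => ?_⟩
      exact hl.2.2 a h a (by simp) rfl
    have ih := ih hl'.1
    have : runPainter π (l ++ [a]) = runPainter π l ++ [(a, π (runPainter π l) a)] :=
      runAux_append π l a []
    rw [this, List.mem_append, ih]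
    by_cases he : e ∈ l
    · have hea : e ≠ a := fun h => hl'.2 (h ▸ he)
      rw [List.idxOf_append_of_mem he, List.take_append_of_le_length (List.idxOf_le_length)]
      simp [he, hea]
    · by_cases hea : e = a
      · subst hea
        rw [List.idxOf_append]
        simp [he]
      · simp [he, hea]

lemma colorGraph_take {V : Type} {r : ℕ} (π : PainterStrategy V r) (l : List (Sym2 V)) (hl : l.Nodup)
    (t : ℕ) (c : Fin r) :
    (colorGraph (runPainter π (l.take t)) c).Adj =
      bef (colorGraph (runPainter π l) c) (fun e => l.idxOf e) t := by
  funext x y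
  apply propext
  simp only [colorGraph, bef, fromEdgeSet_adj, Set.mem_setOf_eq]
  rw [mem_run π l hl, mem_run π (l.take t) (hl.sublist (List.take_sublist _ _))]
  by_cases he : s(x,y) ∈ l
  · by_cases ht : l.idxOf s(x,y) < t
    · have h1 : s(x,y) ∈ l.take t := (List.mem_take_iff_idxOf_lt he).2 ht
      have h2 : (l.take t).idxOf s(x,y) = l.idxOf s(x,y) := by
        conv_rhs => rw [← List.take_append_drop t l]
        rw [List.idxOf_append_of_mem h1]
      rw [h2, List.take_take, min_eq_left ht.le]
      simp [he, h1, ht]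
    · have h1 : s(x,y) ∉ l.take t := fun h => ht ((List.mem_take_iff_idxOf_lt he).1 h)
      simp [h1, ht]
  · have h1 : s(x,y) ∉ l.take t := fun h => he (List.mem_of_mem_take h)
    simp [he, h1]

noncomputable def strat (V : Type) (L : ℕ) : PainterStrategy V 2 := fun h e =>
  if ¬ Big (colorGraph h 0).Adj 1 e then 0
  else if ¬ Big (colorGraph h 1).Adj 3 e then 1
  else if ¬ Big (colorGraph h 0).Adj (L-1) e then 0 else 1

lemma model_of_play {V : Type} (L : ℕ) (l : List (Sym2 V)) (hl : ValidEdgeSeq l)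
    (hac : (boardOf l).IsAcyclic) :
    Model (boardOf l) (colorGraph (runPainter (strat V L) l) 0)
      (colorGraph (runPainter (strat V L) l) 1) (fun e => l.idxOf e) L := by
  have hadj : ∀ c x y, (colorGraph (runPainter (strat V L) l) c).Adj x y →
      s(x,y) ∈ l ∧ c = strat V L (runPainter (strat V L) (l.take (l.idxOf s(x,y)))) s(x,y) ∧ x ≠ y := by
    intro c x y h
    simp only [colorGraph, fromEdgeSet_adj, Set.mem_setOf_eq] at h
    rw [mem_run _ _ hl.1] at h
    exact ⟨h.1.1, h.1.2, h.2⟩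
  have hG : ∀ c x y, (colorGraph (runPainter (strat V L) l) c).Adj x y → (boardOf l).Adj x y := by
    intro c x y h
    have := hadj c x y h
    simp [boardOf, this.1, this.2.2]
  refine ⟨hac, fun h => hG _ _ _ h, fun h => hG _ _ _ h, ?_, ?_, ?_, ?_⟩
  · intro x y h1 h2
    have h1 := (hadj _ _ _ h1).2.1
    have h2 := (hadj _ _ _ h2).2.1
    rw [← h1] at h2
    exact absurd h2 (by decide)
  · intro x y x' y' h1 h2 h
    simp only [boardOf, fromEdgeSet_adj, Set.mem_setOf_eq] at h1 h2
    exact (List.idxOf_inj h1.1).1 h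
  · intro x y h
    have := (hadj _ _ _ h).2.1
    simp only [strat] at this
    rw [colorGraph_take _ _ hl.1, colorGraph_take _ _ hl.1] at this
    by_contra hcon
    push Not at hcon
    simp only [hcon.1, not_true_eq_false, if_false] at this
    split_ifs at this with h1 h2
    · exact absurd this (by decide)
    · exact h2 (hcon.2 h1)
    · exact absurd this (by decide)
  · intro x y h
    have := (hadj _ _ _ h).2.1
    simp only [strat] at this
    rw [colorGraph_take _ _ hl.1, colorGraph_take _ _ hl.1] at this
    split_ifs at this with h1 h2 h3
    · exact ⟨h1, Or.inr h3⟩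
    · exact absurd this (by decide)
    · exact ⟨h1, Or.inl h2⟩
    · exact absurd this (by decide)

lemma bN_le_tree {V : Type} [Fintype V] {G : SimpleGraph V} {k : ℕ} (hG : TreeSizeLE G k) {x u : V} :
    bN G x u ≤ k + 1 := by
  let C := G.connectedComponentMk u
  have hc : (G.induce C.supp).Connected := C.connected_toSimpleGraph
  have h1 := hG.2 C.supp hc
  have h2 := hc.card_vert_le_card_edgeSet_add_one
  have h3 : Nat.card (G.induce C.supp).edgeSet ≤ edgesWithin G C.supp := by
    unfold edgesWithin
    rw [Nat.card_coe_set_eq]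
    apply Set.ncard_le_ncard_of_injOn (Sym2.map Subtype.val) _ _ (Set.toFinite _)
    · intro e he
      induction e using Sym2.ind with
      | _ a b =>
      simp at he
      simp only [Sym2.map_mk, Set.mem_inter_iff, Set.mem_setOf_eq, Sym2.mem_iff, mem_edgeSet]
      refine ⟨he, ?_⟩
      rintro v (rfl | rfl)
      · exact a.2
      · exact b.2
    · exact (Sym2.map.injective Subtype.val_injective).injOn
  rw [Nat.card_coe_set_eq] at h2
  have h4 : bN G x u ≤ C.supp.ncard := by
    apply Set.ncard_le_ncard _ (Set.toFinite _)
    rintro y ⟨p, -, -⟩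
    rw [ConnectedComponent.mem_supp_iff, ConnectedComponent.eq]
    exact p.reachable.symm
  omega

lemma main_bound (L k : ℕ) (hL : 2 ≤ L) (h : BuilderWinsTree (SimpleGraph.pathGraph (L + 1)) 2 k) :
    ((L - 1) / 5) * (8 * (L - 1) - 36) ≤ 3 * (k + 1) := by
  obtain ⟨a, h⟩ := h
  obtain ⟨l, hl, ht, c, φ, hφ⟩ := h (strat (Fin a) L)
  have ht := ht l.length
  rw [List.take_length] at ht
  have M := model_of_play L l hl ht.1
  let f : ℕ → Fin a := fun i => φ ⟨min i L, by omega⟩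
  have hinj : ∀ i j, i ≤ L → j ≤ L → f i = f j → i = j := by
    intro i j hi hj h
    have := φ.injective h
    simp at this
    omega
  have hadj : ∀ i, i < L → (colorGraph (runPainter (strat (Fin a) L) l) c).Adj (f i) (f (i+1)) := by
    intro i hi
    apply hφ
    rw [pathGraph_adj]
    left
    simp
    omega
  have hc : c = 0 ∨ c = 1 := by omega
  rcases hc with rfl | rfl
  · exact (M.no_red hL f hadj hinj).elim
  · exact (M.blue_total (by omega) f hadj hinj).trans (Nat.mul_le_mul_left _ (bN_le_tree ht))

/-- lower bound of Theorem 7. For paths `P_ℓ` (with `ℓ` edges, i.e. the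
path graph on `ℓ+1` vertices), `liminf k*(P_ℓ,2)/ℓ² ≥ 8/15`: for every `ε > 0` there is `ℓ₀`
such that for all `ℓ ≥ ℓ₀`, every tree size restriction `k` for which Builder has a winning
strategy in the deterministic `P_ℓ`-avoidance game with 2 colors satisfies
`k ≥ (8/15 - ε)·ℓ²`. -/
theorem statement5 :
    ∀ ε : ℝ, 0 < ε → ∃ ℓ₀ : ℕ, ∀ ℓ : ℕ, ℓ₀ ≤ ℓ →
      ∀ k : ℕ, BuilderWinsTree (SimpleGraph.pathGraph (ℓ + 1)) 2 k →
        (8 / 15 - ε) * (ℓ : ℝ) ^ 2 ≤ (k : ℝ) := by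
  intro ε hε
  obtain ⟨N, hN⟩ := exists_nat_gt (6 / ε)
  refine ⟨N + 10, fun L hL k hk => ?_⟩
  have h := main_bound L k (by omega) hk
  obtain ⟨n, rfl⟩ : ∃ n, L = n + 10 := ⟨L - 10, by omega⟩
  have h5 : n + 5 ≤ 5 * ((n + 10 - 1) / 5) := by omega
  have h6 : 8 * (n + 10 - 1) - 36 = 8 * n + 36 := by omega
  rw [h6] at h
  have h7 : (n + 5) * (8 * n + 36) ≤ 15 * (k + 1) := by
    calc (n + 5) * (8 * n + 36) ≤ 5 * ((n + 10 - 1) / 5) * (8 * n + 36) := Nat.mul_le_mul_right _ h5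
      _ = 5 * ((n + 10 - 1) / 5 * (8 * n + 36)) := by ring
      _ ≤ 5 * (3 * (k + 1)) := Nat.mul_le_mul_left _ h
      _ = 15 * (k + 1) := by ring
  have h8 : ((n : ℝ) + 5) * (8 * n + 36) ≤ 15 * (k + 1) := by exact_mod_cast h7
  have h9 : (N : ℝ) ≤ n := by exact_mod_cast (by omega : N ≤ n)
  rw [div_lt_iff₀ hε] at hN
  have hn0 : (0 : ℝ) ≤ n := Nat.cast_nonneg n
  have h10 : 6 ≤ ε * ((n : ℝ) + 10) := by nlinarith
  have h11 : 6 * ((n : ℝ) + 10) ≤ ε * ((n : ℝ) + 10) ^ 2 := by nlinarith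
  push_cast
  nlinarith
end

section
/- Let P_ℓ denote the path with ℓ edges and let k*(P_ℓ,2) be the smallest integer k for which Builder has a winning strategy in the deterministic P_ℓ-avoidance game with 2 colors and tree size restriction k. Then for every ℓ ≥ 1, k*(P_ℓ,2) ≤ ((9+5√3)/6) · ℓ^{2·log₂(1+√3)}. -/
open SimpleGraph Filter Asymptotics
open scoped Classical

namespace PathGame

/-- `T` is a union of components of the board. -/
def Closed {V : Type} (l : List (Sym2 V)) (T : Finset V) : Prop :=
  ∀ x y, s(x, y) ∈ l → x ∈ T → y ∈ T

def Inv {V : Type} (K : ℕ) (l : List (Sym2 V)) : Prop :=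
  ValidEdgeSeq l ∧ ∀ i : ℕ, (boardOf (l.take i)).IsAcyclic ∧
    ∀ v, ∃ T : Finset V, v ∈ T ∧ Closed (l.take i) T ∧ T.card ≤ K

def Fresh {V : Type} (l : List (Sym2 V)) (S : Finset V) : Prop :=
  ∀ e ∈ l, ∀ x ∈ e, x ∉ S

/-- `v` is the end of a path of color `c` with at least `n` edges inside `T`. -/
def PEnd {V : Type} (h : EdgeHistory V 2) (c : Fin 2) (T : Finset V) (v : V) (n : ℕ) : Prop :=
  ∃ q : List V, n ≤ q.length ∧ (v :: q).Nodup ∧ (∀ x ∈ v :: q, x ∈ T) ∧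
    (v :: q).IsChain (fun x y => (s(x, y), c) ∈ h)

lemma closed_reach {V : Type} {l : List (Sym2 V)} {T : Finset V} (hT : Closed l T) {u v : V}
    (h : (boardOf l).Reachable u v) (hu : u ∈ T) : v ∈ T := by
  obtain ⟨w⟩ := h
  induction w with
  | nil => exact hu
  | cons hadj _ ih =>
    apply ih
    simp only [boardOf, SimpleGraph.fromEdgeSet_adj, Set.mem_ofPred_eq] at hadj
    exact hT _ _ hadj.1 hu

lemma treeSize {V : Type} [Finite V] {K : ℕ} {l : List (Sym2 V)} (h1 : (boardOf l).IsAcyclic)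
    (h2 : ∀ v, ∃ T : Finset V, v ∈ T ∧ Closed l T ∧ T.card ≤ K) :
    TreeSizeLE (boardOf l) (K - 1) := by
  refine ⟨h1, fun S hS => ?_⟩
  have : Fintype V := Fintype.ofFinite V
  have htree : ((boardOf l).induce S).IsTree := ⟨hS, h1.induce S⟩
  have hc := htree.card_edgeFinset
  obtain ⟨⟨v, hv⟩⟩ := hS.nonempty
  obtain ⟨T, hvT, hT, hTK⟩ := h2 v
  have hST : S.toFinset ⊆ T := by
    intro w hw
    have hw' : w ∈ S := by simpa using hw
    have := hS.preconnected ⟨v, hv⟩ ⟨w, hw'⟩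
    have h3 := this.map (SimpleGraph.Embedding.induce S).toHom
    exact closed_reach hT h3 hvT
  have hle := Finset.card_le_card hST
  rw [Set.toFinset_card] at hle
  have : edgesWithin (boardOf l) S ≤ ((boardOf l).induce S).edgeFinset.card := by
    unfold edgesWithin
    have hsub : (boardOf l).edgeSet ∩ {e | ∀ v ∈ e, v ∈ S} ⊆
        (Sym2.map (Subtype.val : S → V)) '' (((boardOf l).induce S).edgeFinset : Set (Sym2 S)) := by
      rintro e ⟨he, heS⟩
      induction e using Sym2.ind with
      | _ x y =>
        have hx : x ∈ S := heS x (by simp)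
        have hy : y ∈ S := heS y (by simp)
        refine ⟨s(⟨x, hx⟩, ⟨y, hy⟩), ?_, by simp⟩
        simpa using he
    refine (Set.ncard_le_ncard hsub (Set.toFinite _)).trans ?_
    refine (Set.ncard_image_le (Set.toFinite _)).trans ?_
    rw [Set.ncard_coe_finset]
  omega

lemma closed_append {V : Type} {l l' : List (Sym2 V)} {T S : Finset V} (hT : Closed l T)
    (hl' : ∀ e ∈ l', ∀ x ∈ e, x ∈ S) (hd : Disjoint T S) : Closed (l ++ l') T := by
  intro x y hxy hx
  rcases List.mem_append.1 hxy with h | h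
  · exact hT x y h hx
  · exact absurd (hl' _ h x (by simp)) (Finset.disjoint_left.1 hd hx)

lemma closed_join {V : Type} [DecidableEq V] {l : List (Sym2 V)} {T₁ T₂ : Finset V} (h1 : Closed l T₁)
    (h2 : Closed l T₂) {u v : V} (hu : u ∈ T₁) (hv : v ∈ T₂) :
    Closed (l ++ [s(u, v)]) (T₁ ∪ T₂) := by
  intro x y hxy hx
  rw [Finset.mem_union] at hx ⊢
  rcases List.mem_append.1 hxy with h | h
  · exact hx.imp (h1 x y h) (h2 x y h)
  · simp only [List.mem_singleton, Sym2.eq_iff] at h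
    rcases h with ⟨rfl, rfl⟩ | ⟨rfl, rfl⟩ <;> simp [*]

lemma inv_step {V : Type} [DecidableEq V] {K : ℕ} {l : List (Sym2 V)} (hI : Inv K l) {T₁ T₂ : Finset V}
    (h1 : Closed l T₁) (h2 : Closed l T₂) (hd : Disjoint T₁ T₂) {u v : V} (hu : u ∈ T₁)
    (hv : v ∈ T₂) (hK : T₁.card + T₂.card ≤ K) : Inv K (l ++ [s(u, v)]) := by
  have huv : u ≠ v := by
    rintro rfl; exact Finset.disjoint_left.1 hd hu hv
  have hvT : v ∉ T₁ := fun h => Finset.disjoint_left.1 hd h hv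
  have hnl : s(u, v) ∉ l := fun h => hvT (h1 u v h hu)
  refine ⟨⟨?_, ?_⟩, fun i => ?_⟩
  · rw [List.nodup_append]
    refine ⟨hI.1.1, by simp, ?_⟩
    rintro a ha b hb rfl
    rw [List.mem_singleton] at hb
    exact hnl (hb ▸ ha)
  · intro e he
    rcases List.mem_append.1 he with h | h
    · exact hI.1.2 e h
    · rw [List.mem_singleton] at h
      subst h
      simpa using huv
  · by_cases hi : i ≤ l.length
    · rw [List.take_append_of_le_length hi]
      exact hI.2 i
    · have e1 : (l ++ [s(u, v)]).take i = l ++ [s(u, v)] :=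
        List.take_of_length_le (by simp; omega)
      rw [e1]
      have h0 := hI.2 l.length
      rw [List.take_length] at h0
      refine ⟨?_, fun w => ?_⟩
      · have hnr : ¬ (boardOf l).Reachable u v := fun h => hvT (closed_reach h1 h hu)
        have h3 := IsAcyclic.sup_edge_of_not_reachable hnr h0.1
        refine h3.anti ?_
        intro x y hxy
        simp only [boardOf, SimpleGraph.fromEdgeSet_adj, Set.mem_ofPred_eq, List.mem_append,
          List.mem_singleton] at hxy
        simp only [boardOf, SimpleGraph.sup_adj, SimpleGraph.edge, SimpleGraph.fromEdgeSet_adj,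
          Set.mem_ofPred_eq, Set.mem_singleton_iff]
        tauto
      · by_cases hw : w ∈ T₁ ∪ T₂
        · exact ⟨T₁ ∪ T₂, hw, closed_join h1 h2 hu hv, (Finset.card_union_le _ _).trans hK⟩
        · obtain ⟨T, hwT, hT, hTK⟩ := h0.2 w
          refine ⟨T \ (T₁ ∪ T₂), by simp [hwT] at hw ⊢; exact hw, ?_,
            (Finset.card_le_card Finset.sdiff_subset).trans hTK⟩
          intro x y hxy hx
          rw [Finset.mem_sdiff] at hx ⊢
          have hyx : s(y, x) ∈ l ++ [s(u, v)] := by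
            rw [show s(y, x) = s(x, y) from Sym2.eq_swap]
            exact hxy
          refine ⟨?_, fun hy => hx.2 (closed_join h1 h2 hu hv y x hyx hy)⟩
          rcases List.mem_append.1 hxy with h | h
          · exact hT x y h hx.1
          · exfalso
            apply hx.2
            simp only [List.mem_singleton, Sym2.eq_iff] at h
            rw [Finset.mem_union]
            rcases h with ⟨rfl, rfl⟩ | ⟨rfl, rfl⟩
            · exact Or.inl hu
            · exact Or.inr hv

lemma run_aux {V : Type} {r : ℕ} (π : PainterStrategy V r) (l l' : List (Sym2 V)) :
    ∀ h, runPainterAux π h (l ++ l') = runPainterAux π (runPainterAux π h l) l' := by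
  induction l with
  | nil => intro h; rfl
  | cons e es ih => intro h; exact ih _

lemma run_sub_aux {V : Type} {r : ℕ} (π : PainterStrategy V r) (l : List (Sym2 V)) :
    ∀ h, h ⊆ runPainterAux π h l := by
  induction l with
  | nil => intro h; exact List.Subset.refl _
  | cons e es ih =>
    intro h
    exact List.Subset.trans (List.subset_append_left _ _) (ih _)

lemma run_sub {V : Type} {r : ℕ} (π : PainterStrategy V r) (l l' : List (Sym2 V)) :
    runPainter π l ⊆ runPainter π (l ++ l') := by
  unfold runPainter
  rw [run_aux]
  exact run_sub_aux _ _ _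

lemma run_mem {V : Type} {r : ℕ} (π : PainterStrategy V r) (l : List (Sym2 V)) (e : Sym2 V) :
    ∃ c, (e, c) ∈ runPainter π (l ++ [e]) := by
  unfold runPainter
  rw [run_aux]
  exact ⟨π (runPainterAux π [] l) e, by simp [runPainterAux]⟩

lemma PEnd.mono {V : Type} {h h' : EdgeHistory V 2} {c : Fin 2} {T T' : Finset V} {v : V}
    {n n' : ℕ} (H : PEnd h c T v n) (hh : h ⊆ h') (hT : T ⊆ T') (hn : n' ≤ n) :
    PEnd h' c T' v n' := by
  obtain ⟨q, h1, h2, h3, h4⟩ := H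
  exact ⟨q, hn.trans h1, h2, fun x hx => hT (h3 x hx), h4.imp fun x y hxy => hh hxy⟩

lemma PEnd.zero {V : Type} (h : EdgeHistory V 2) (c : Fin 2) {T : Finset V} {v : V}
    (hv : v ∈ T) : PEnd h c T v 0 :=
  ⟨[], by simp, by simp, by simpa using hv, by simp⟩

lemma PEnd.ext {V : Type} [DecidableEq V] {h : EdgeHistory V 2} {c : Fin 2} {T₁ T₂ : Finset V} {u v : V}
    {n : ℕ} (H : PEnd h c T₁ u n) (hv : v ∈ T₂) (hd : Disjoint T₁ T₂)
    (he : (s(u, v), c) ∈ h) : PEnd h c (T₁ ∪ T₂) v (n + 1) := by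
  obtain ⟨q, h1, h2, h3, h4⟩ := H
  refine ⟨u :: q, by simpa using h1, ?_, ?_, ?_⟩
  · rw [List.nodup_cons]
    exact ⟨fun hm => Finset.disjoint_left.1 hd (h3 _ hm) hv, h2⟩
  · intro x hx
    rw [Finset.mem_union]
    rcases List.mem_cons.1 hx with rfl | hx
    · exact Or.inr hv
    · exact Or.inl (h3 x hx)
  · rw [List.isChain_cons_cons]
    exact ⟨by rwa [Sym2.eq_swap], h4⟩

lemma PEnd.join {V : Type} [DecidableEq V] {h : EdgeHistory V 2} {c : Fin 2} {T₁ T₂ : Finset V} {u v : V}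
    {n m : ℕ} (H : PEnd h c T₁ u n) (H' : PEnd h c T₂ v m) (hd : Disjoint T₁ T₂)
    (he : (s(u, v), c) ∈ h) : ∃ w ∈ T₁ ∪ T₂, PEnd h c (T₁ ∪ T₂) w (n + m + 1) := by
  obtain ⟨q, h1, h2, h3, h4⟩ := H
  obtain ⟨q', h1', h2', h3', h4'⟩ := H'
  have key : ∃ w t, (u :: q).reverse ++ (v :: q') = w :: t := by
    cases hh : (u :: q).reverse ++ (v :: q') with
    | nil => simp at hh
    | cons w t => exact ⟨w, t, rfl⟩
  obtain ⟨w, t, hwt⟩ := key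
  have hmem : ∀ x ∈ w :: t, x ∈ T₁ ∪ T₂ := by
    intro x hx
    rw [← hwt, List.mem_append, List.mem_reverse] at hx
    rw [Finset.mem_union]
    exact hx.imp (h3 x) (h3' x)
  refine ⟨w, hmem w (by simp), t, ?_, ?_, hmem, ?_⟩
  · have := congrArg List.length hwt
    simp at this
    omega
  · rw [← hwt, List.nodup_append]
    refine ⟨List.nodup_reverse.2 h2, h2', ?_⟩
    rintro a ha b hb rfl
    exact Finset.disjoint_left.1 hd (h3 a (List.mem_reverse.1 ha)) (h3' a hb)
  · rw [← hwt, List.isChain_append, List.isChain_reverse]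
    refine ⟨h4.imp fun x y hxy => ?_, h4', ?_⟩
    · rwa [Sym2.eq_swap]
    · intro x hx y hy
      simp at hx hy
      subst hx hy
      exact he

def Out {V : Type} (h : EdgeHistory V 2) (T : Finset V) (p : ℕ × ℕ) : Prop :=
  ∃ v ∈ T, PEnd h 0 T v p.1 ∧ PEnd h 1 T v p.2

def Hits (Θ : Finset (ℕ × ℕ)) (i j : ℕ) : Prop := ∃ r ∈ Θ, r.1 ≤ i ∧ r.2 ≤ j

def CanForce (K m : ℕ) (Φ : Finset (ℕ × ℕ)) : Prop :=
  ∃ N : ℕ, ∀ (A : ℕ) (π : PainterStrategy (Fin A) 2) (l : List (Sym2 (Fin A)))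
    (S : Finset (Fin A)), Inv K l → Fresh l S → N ≤ S.card →
    ∃ l', Inv K (l ++ l') ∧ (∀ e ∈ l', ∀ x ∈ e, x ∈ S) ∧
      ∃ T ⊆ S, T.card ≤ m ∧ Closed (l ++ l') T ∧ ∃ p ∈ Φ, Out (runPainter π (l ++ l')) T p

lemma CanForce.mono {K m m' : ℕ} {Φ Θ : Finset (ℕ × ℕ)} (H : CanForce K m Φ) (hm : m ≤ m')
    (hΦ : ∀ p ∈ Φ, Hits Θ p.1 p.2) : CanForce K m' Θ := by
  obtain ⟨N, H⟩ := H
  refine ⟨N, fun A π l S hI hF hN => ?_⟩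
  obtain ⟨l', a1, a2, T, a3, a4, a5, p, hp, v, hv, a6, a7⟩ := H A π l S hI hF hN
  obtain ⟨r, hr, r1, r2⟩ := hΦ p hp
  exact ⟨l', a1, a2, T, a3, a4.trans hm, a5, r, hr, v, hv,
    a6.mono (List.Subset.refl _) (Finset.Subset.refl _) r1,
    a7.mono (List.Subset.refl _) (Finset.Subset.refl _) r2⟩

lemma canForce_zero (K : ℕ) : CanForce K 1 {(0, 0)} := by
  refine ⟨1, fun A π l S hI hF hN => ⟨[], by simpa using hI, by simp, ?_⟩⟩
  obtain ⟨v, hv⟩ := Finset.card_pos.1 hN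
  refine ⟨{v}, by simpa using hv, by simp, ?_, (0, 0), by simp, v, by simp,
    PEnd.zero _ _ (by simp), PEnd.zero _ _ (by simp)⟩
  intro x y hxy hx
  rw [List.append_nil] at hxy
  rw [Finset.mem_singleton] at hx
  subst hx
  exact absurd hv (hF _ hxy x (by simp))

lemma CanForce.bind {K m₁ m₂ : ℕ} {Φ Θ : Finset (ℕ × ℕ)} (H₁ : CanForce K m₁ Φ)
    (hK : m₁ + m₂ ≤ K)
    (H₂ : ∀ p ∈ Φ, ∃ Ψ, CanForce K m₂ Ψ ∧ ∀ q ∈ Ψ, Hits Θ p.1 p.2 ∨ Hits Θ q.1 q.2 ∨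
      ((Hits Θ (p.1 + q.1 + 1) 0 ∨ Hits Θ (p.1 + 1) q.2 ∨ Hits Θ (q.1 + 1) p.2) ∧
       (Hits Θ 0 (p.2 + q.2 + 1) ∨ Hits Θ q.1 (p.2 + 1) ∨ Hits Θ p.1 (q.2 + 1)))) :
    CanForce K (m₁ + m₂) Θ := by
  obtain ⟨N₁, H₁⟩ := H₁
  choose! Ψ hΨ hΘ using H₂
  choose! N₂ H₂ using hΨ
  refine ⟨N₁ + Φ.sup N₂, fun A π l S hI hF hN => ?_⟩
  obtain ⟨S₁, hS₁, hc₁⟩ := Finset.exists_subset_card_eq (show N₁ ≤ S.card by omega)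
  obtain ⟨l₁, hI₁, hl₁, T₁, hT₁S, hT₁c, hT₁, p, hp, hO₁⟩ :=
    H₁ A π l S₁ hI (fun e he x hx hS => hF e he x hx (hS₁ hS)) hc₁.ge
  have hF₂ : Fresh (l ++ l₁) (S \ S₁) := by
    intro e he x hx hS
    rw [Finset.mem_sdiff] at hS
    rcases List.mem_append.1 he with h | h
    · exact hF e h x hx hS.1
    · exact hS.2 (hl₁ e h x hx)
  have hN₂ : N₂ p ≤ (S \ S₁).card := by
    rw [Finset.card_sdiff_of_subset hS₁]
    have := Finset.le_sup (f := N₂) hp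
    omega
  obtain ⟨l₂, hI₂, hl₂, T₂, hT₂S, hT₂c, hT₂, q, hq, hO₂⟩ :=
    H₂ p hp A π (l ++ l₁) (S \ S₁) hI₁ hF₂ hN₂
  have hd : Disjoint T₁ T₂ :=
    Finset.disjoint_of_subset_left hT₁S
      (Finset.disjoint_of_subset_right hT₂S Finset.disjoint_sdiff)
  have hT₁' : Closed (l ++ l₁ ++ l₂) T₁ := closed_append hT₁ hl₂
    (Finset.disjoint_of_subset_left hT₁S Finset.disjoint_sdiff)
  have hin : ∀ e ∈ l₁ ++ l₂, ∀ x ∈ e, x ∈ S := by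
    intro e he x hx
    rcases List.mem_append.1 he with h | h
    · exact hS₁ (hl₁ e h x hx)
    · exact (Finset.mem_sdiff.1 (hl₂ e h x hx)).1
  have hT₁S' : T₁ ⊆ S := hT₁S.trans hS₁
  have hT₂S' : T₂ ⊆ S := hT₂S.trans Finset.sdiff_subset
  obtain ⟨v₁, hv₁, b1, b2⟩ := hO₁
  obtain ⟨v₂, hv₂, d1, d2⟩ := hO₂
  have hsub := run_sub π (l ++ l₁) l₂
  rcases hΘ p hp q hq with ⟨r, hr, r1, r2⟩ | ⟨r, hr, r1, r2⟩ | hjoin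
  · refine ⟨l₁ ++ l₂, by rwa [← List.append_assoc], hin, T₁, hT₁S', by omega,
      by rwa [← List.append_assoc], r, hr, v₁, hv₁, ?_, ?_⟩ <;> rw [← List.append_assoc]
    · exact b1.mono hsub (Finset.Subset.refl _) r1
    · exact b2.mono hsub (Finset.Subset.refl _) r2
  · refine ⟨l₁ ++ l₂, by rwa [← List.append_assoc], hin, T₂, hT₂S', by omega,
      by rwa [← List.append_assoc], r, hr, v₂, hv₂, ?_, ?_⟩ <;> rw [← List.append_assoc]
    · exact d1.mono (List.Subset.refl _) (Finset.Subset.refl _) r1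
    · exact d2.mono (List.Subset.refl _) (Finset.Subset.refl _) r2
  · have hsub2 := run_sub π (l ++ l₁ ++ l₂) [s(v₁, v₂)]
    obtain ⟨c, hc⟩ := run_mem π (l ++ l₁ ++ l₂) s(v₁, v₂)
    have eq : l ++ (l₁ ++ l₂ ++ [s(v₁, v₂)]) = l ++ l₁ ++ l₂ ++ [s(v₁, v₂)] := by simp
    refine ⟨l₁ ++ l₂ ++ [s(v₁, v₂)], ?_, ?_, T₁ ∪ T₂, Finset.union_subset hT₁S' hT₂S',
      (Finset.card_union_le _ _).trans (by omega), ?_, ?_⟩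
    · rw [eq]
      exact inv_step hI₂ hT₁' hT₂ hd hv₁ hv₂ (by omega)
    · intro e he x hx
      rcases List.mem_append.1 he with h | h
      · exact hin e h x hx
      · rw [List.mem_singleton] at h
        subst h
        rcases Sym2.mem_iff.1 hx with rfl | rfl
        · exact hT₁S' hv₁
        · exact hT₂S' hv₂
    · rw [eq]
      exact closed_join hT₁' hT₂ hv₁ hv₂
    · rw [eq]
      set h := runPainter π (l ++ l₁ ++ l₂ ++ [s(v₁, v₂)]) with hh
      have b1 := b1.mono (List.Subset.trans hsub hsub2) (Finset.Subset.refl _) le_rfl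
      have b2 := b2.mono (List.Subset.trans hsub hsub2) (Finset.Subset.refl _) le_rfl
      have d1 := d1.mono hsub2 (Finset.Subset.refl _) le_rfl
      have d2 := d2.mono hsub2 (Finset.Subset.refl _) le_rfl
      have U1 : T₁ ⊆ T₁ ∪ T₂ := Finset.subset_union_left
      have U2 : T₂ ⊆ T₁ ∪ T₂ := Finset.subset_union_right
      have R := List.Subset.refl h
      have hc' : (s(v₂, v₁), c) ∈ h := by rwa [Sym2.eq_swap]
      have fin : ∀ i j, Hits Θ i j → (∃ v ∈ T₁ ∪ T₂, PEnd h 0 (T₁ ∪ T₂) v i ∧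
          PEnd h 1 (T₁ ∪ T₂) v j) → ∃ p ∈ Θ, Out h (T₁ ∪ T₂) p := by
        rintro i j ⟨r, hr, r1, r2⟩ ⟨v, hv, e1, e2⟩
        exact ⟨r, hr, v, hv, e1.mono R (Finset.Subset.refl _) r1,
          e2.mono R (Finset.Subset.refl _) r2⟩
      have hcc : c = 0 ∨ c = 1 := by omega
      rcases hcc with rfl | rfl
      · rcases hjoin.1 with g | g | g
        · obtain ⟨w, hw, e⟩ := b1.join d1 hd hc
          exact fin _ _ g ⟨w, hw, e, PEnd.zero _ _ hw⟩
        · exact fin _ _ g ⟨v₂, U2 hv₂, b1.ext hv₂ hd hc, d2.mono R U2 le_rfl⟩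
        · have := d1.ext hv₁ hd.symm hc'
          rw [Finset.union_comm] at this
          exact fin _ _ g ⟨v₁, U1 hv₁, this, b2.mono R U1 le_rfl⟩
      · rcases hjoin.2 with g | g | g
        · obtain ⟨w, hw, e⟩ := b2.join d2 hd hc
          exact fin _ _ g ⟨w, hw, PEnd.zero _ _ hw, e⟩
        · exact fin _ _ g ⟨v₂, U2 hv₂, d1.mono R U2 le_rfl, b2.ext hv₂ hd hc⟩
        · have := d2.ext hv₁ hd.symm hc'
          rw [Finset.union_comm] at this
          exact fin _ _ g ⟨v₁, U1 hv₁, b1.mono R U1 le_rfl, this⟩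

/-- Number of vertices needed. -/
def hh : ℕ → ℕ
  | 0 => 1
  | 1 => 1
  | 2 => 2
  | (n + 3) => 2 * hh (n + 2) + 2 * hh (n + 1)

lemma hh_pos : ∀ n, 1 ≤ hh n
  | 0 => by simp [hh]
  | 1 => by simp [hh]
  | 2 => by simp [hh]
  | (n + 3) => by
    have := hh_pos (n + 2)
    simp only [hh]
    omega

lemma force_step {K m₁ m₂ x y : ℕ}
    (h0 : CanForce K m₁ {(x, 0), (0, y)}) (h1 : CanForce K m₂ {(2 * x + 1, 0), (0, y)})
    (h2 : CanForce K m₂ {(x, 0), (0, 2 * y + 1)}) (hK : 2 * m₂ + 2 * m₁ ≤ K) :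
    CanForce K (2 * m₂ + 2 * m₁) {(2 * x + 1, 0), (0, 2 * y + 1)} := by
  have mid : CanForce K (m₁ + m₂) {(2 * x + 1, 0), (0, 2 * y + 1), (x, y)} := by
    refine h0.bind (by omega) ?_
    intro p hp
    simp only [Finset.mem_insert, Finset.mem_singleton] at hp
    rcases hp with rfl | rfl
    · refine ⟨_, h1, ?_⟩
      intro q hq
      simp only [Finset.mem_insert, Finset.mem_singleton] at hq
      rcases hq with rfl | rfl
      · exact Or.inr (Or.inl ⟨(2 * x + 1, 0), by simp, by simp, by simp⟩)
      · exact Or.inr (Or.inr ⟨Or.inr (Or.inl ⟨(x, y), by simp, by simp, by simp⟩),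
          Or.inr (Or.inr ⟨(x, y), by simp, by simp, by simp⟩)⟩)
    · refine ⟨_, h2, ?_⟩
      intro q hq
      simp only [Finset.mem_insert, Finset.mem_singleton] at hq
      rcases hq with rfl | rfl
      · exact Or.inr (Or.inr ⟨Or.inr (Or.inr ⟨(x, y), by simp, by simp, by simp⟩),
          Or.inr (Or.inl ⟨(x, y), by simp, by simp, by simp⟩)⟩)
      · exact Or.inr (Or.inl ⟨(0, 2 * y + 1), by simp, by simp, by simp⟩)
  have : CanForce K ((m₁ + m₂) + (m₁ + m₂)) {(2 * x + 1, 0), (0, 2 * y + 1)} := by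
    refine mid.bind (by omega) fun p hp => ⟨_, mid, fun q hq => ?_⟩
    simp only [Finset.mem_insert, Finset.mem_singleton] at hp hq
    rcases hp with rfl | rfl | rfl
    · exact Or.inl ⟨(2 * x + 1, 0), by simp, by simp, by simp⟩
    · exact Or.inl ⟨(0, 2 * y + 1), by simp, by simp, by simp⟩
    · rcases hq with rfl | rfl | rfl
      · exact Or.inr (Or.inl ⟨(2 * x + 1, 0), by simp, by simp, by simp⟩)
      · exact Or.inr (Or.inl ⟨(0, 2 * y + 1), by simp, by simp, by simp⟩)
      · exact Or.inr (Or.inr ⟨Or.inl ⟨(2 * x + 1, 0), by simp, by simp; omega, by simp⟩,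
          Or.inl ⟨(0, 2 * y + 1), by simp, by simp, by simp; omega⟩⟩)
  have e : 2 * m₂ + 2 * m₁ = (m₁ + m₂) + (m₁ + m₂) := by ring
  rw [e]
  exact this

lemma two_pow_succ_sub (a : ℕ) : 2 ^ (a + 1) - 1 = 2 * (2 ^ a - 1) + 1 := by
  have := Nat.one_le_two_pow (n := a)
  rw [pow_succ]
  omega

lemma force (K : ℕ) : ∀ n a b : ℕ, a + b = n → hh n ≤ K →
    CanForce K (hh n) {(2 ^ a - 1, 0), (0, 2 ^ b - 1)} := by
  intro n
  induction n using Nat.strong_induction_on with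
  | _ n ih =>
    intro a b hab hK
    rcases a with _ | a
    · exact (canForce_zero K).mono (hh_pos n) fun p hp =>
        ⟨(0, 0), by simp, by simp, by simp⟩
    rcases b with _ | b
    · exact (canForce_zero K).mono (hh_pos n) fun p hp =>
        ⟨(0, 0), by simp, by simp, by simp⟩
    rcases n with _ | _ | _ | n
    · omega
    · omega
    · obtain rfl : a = 0 := by omega
      obtain rfl : b = 0 := by omega
      have hK' : 2 ≤ K := hK
      refine (canForce_zero K).bind (m₂ := 1) (by omega) fun p hp =>
        ⟨_, canForce_zero K, fun q hq => ?_⟩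
      rw [Finset.mem_singleton] at hp hq
      subst hp hq
      exact Or.inr (Or.inr ⟨Or.inl ⟨(1, 0), by simp, by simp, by simp⟩,
        Or.inl ⟨(0, 1), by simp, by simp, by simp⟩⟩)
    · have hK' : 2 * hh (n + 2) + 2 * hh (n + 1) ≤ K := hK
      change CanForce K (2 * hh (n + 2) + 2 * hh (n + 1)) _
      have i0 := ih (n + 1) (by omega) a b (by omega) (by omega)
      have i1 := ih (n + 2) (by omega) (a + 1) b (by omega) (by omega)
      have i2 := ih (n + 2) (by omega) a (b + 1) (by omega) (by omega)
      rw [two_pow_succ_sub] at i1 i2 ⊢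
      rw [two_pow_succ_sub b]
      exact force_step i0 i1 i2 hK'

lemma PEnd.copy {V : Type} {h : EdgeHistory V 2} {c : Fin 2} {T : Finset V} {v : V} {n ℓ : ℕ}
    (H : PEnd h c T v n) (hn : ℓ ≤ n) : HasMonoCopy (SimpleGraph.pathGraph (ℓ + 1)) h := by
  obtain ⟨q, h1, h2, -, h4⟩ := H
  set p := v :: q with hp
  have hlen : ℓ + 1 ≤ p.length := by simp [hp]; omega
  have hinj : Function.Injective (fun i : Fin (ℓ + 1) => p[i.1]'(by omega)) := by
    intro i j hij
    exact Fin.ext ((List.Nodup.getElem_inj_iff h2).1 hij)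
  have key : ∀ i j : Fin (ℓ + 1), i.1 + 1 = j.1 →
      (colorGraph h c).Adj (p[i.1]'(by omega)) (p[j.1]'(by omega)) := by
    intro i j hij
    simp only [colorGraph, SimpleGraph.fromEdgeSet_adj, Set.mem_ofPred_eq]
    refine ⟨?_, fun he => ?_⟩
    · have := h4.getElem i.1 (by omega)
      simpa [hij] using this
    · have := hinj he
      omega
  refine ⟨c, ⟨_, hinj⟩, fun i j hij => ?_⟩
  rw [SimpleGraph.pathGraph_adj] at hij
  rcases hij with hij | hij
  · exact key i j hij
  · exact (key j i hij).symm

lemma inv_nil {V : Type} {K : ℕ} (hK : 1 ≤ K) : Inv K ([] : List (Sym2 V)) := by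
  refine ⟨⟨by simp, by simp⟩, fun i => ⟨?_, fun v => ⟨{v}, by simp, ?_, by simpa using hK⟩⟩⟩
  · have : boardOf (List.take i ([] : List (Sym2 V))) = ⊥ := by
      ext x y; simp [boardOf]
    rw [this]
    exact SimpleGraph.isAcyclic_bot
  · intro x y hxy; simp at hxy

lemma builder (n ℓ : ℕ) (h : ℓ ≤ 2 ^ n - 1) :
    BuilderWinsTree (SimpleGraph.pathGraph (ℓ + 1)) 2 (hh (n + n) - 1) := by
  obtain ⟨N, H⟩ := force (hh (n + n)) (n + n) n n rfl le_rfl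
  refine ⟨N, fun π => ?_⟩
  obtain ⟨l', hI, -, T, -, -, -, p, hp, v, hv, e1, e2⟩ :=
    H N π [] Finset.univ (inv_nil (hh_pos _)) (by intro e he; simp at he) (by simp)
  rw [List.nil_append] at hI e1 e2
  refine ⟨l', hI.1, fun i => treeSize (hI.2 i).1 (hI.2 i).2, ?_⟩
  simp only [Finset.mem_insert, Finset.mem_singleton] at hp
  rcases hp with rfl | rfl
  · exact e1.copy h
  · exact e2.copy h

lemma hh_formula : ∀ n : ℕ, 2 * √3 * (hh (n + 1) : ℝ) = (1 + √3) ^ (n + 1) - (1 - √3) ^ (n + 1)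
  | 0 => by simp [hh]; ring
  | 1 => by
    simp [hh]; ring
  | (n + 2) => by
    have h1 := hh_formula n
    have h2 := hh_formula (n + 1)
    have h3 : √3 ^ 2 = (3 : ℝ) := Real.sq_sqrt (by norm_num)
    have e : (hh (n + 2 + 1) : ℝ) = 2 * hh (n + 1 + 1) + 2 * hh (n + 1) := by
      have : hh (n + 3) = 2 * hh (n + 2) + 2 * hh (n + 1) := rfl
      exact_mod_cast this
    rw [e, show 2 * √3 * (2 * (hh (n + 1 + 1) : ℝ) + 2 * hh (n + 1)) =
      2 * (2 * √3 * hh (n + 1 + 1)) + 2 * (2 * √3 * hh (n + 1)) by ring, h1, h2]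
    have a1 : (1 + √3) ^ 2 = 2 * (1 + √3) + 2 := by linear_combination h3
    have a2 : (1 - √3) ^ 2 = 2 * (1 - √3) + 2 := by linear_combination h3
    linear_combination (-(1 + √3) ^ (n + 1)) * a1 + (1 - √3) ^ (n + 1) * a2

lemma hh_bound (n : ℕ) : (hh (n + 1 + (n + 1)) : ℝ) ≤ (9 + 5 * √3) / 6 * ((1 + √3) ^ 2) ^ n := by
  have h1 := hh_formula (n + 1 + n)
  have h3 : √3 ^ 2 = (3 : ℝ) := Real.sq_sqrt (by norm_num)
  have hs : 0 < √3 := by positivity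
  have e2 : (1 - √3) ^ (n + 1 + n + 1) = ((1 - √3) ^ (n + 1)) ^ 2 := by ring
  have e3 : (1 + √3) ^ (n + 1 + n + 1) = (1 + √3) ^ 2 * ((1 + √3) ^ 2) ^ n := by
    rw [← pow_mul]; ring
  have h4 : 0 ≤ ((1 - √3) ^ (n + 1)) ^ 2 := sq_nonneg _
  rw [e2, e3] at h1
  have hP : 0 < ((1 + √3) ^ 2) ^ n := by positivity
  change (hh (n + 1 + n + 1) : ℝ) ≤ _
  generalize ((1 + √3) ^ 2) ^ n = P at *
  have h5 : 2 * √3 * (hh (n + 1 + n + 1) : ℝ) ≤ 2 * √3 * ((9 + 5 * √3) / 6 * P) := by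
    have h6 : (1 + √3) ^ 2 ≤ 2 * √3 * ((9 + 5 * √3) / 6) := by nlinarith
    have h7 := mul_le_mul_of_nonneg_right h6 hP.le
    linarith
  exact le_of_mul_le_mul_left h5 (by positivity)

end PathGame

/-- upper bound of Theorem 7. For every `ℓ ≥ 1`, we have
`k*(P_ℓ,2) ≤ ((9+5√3)/6)·ℓ^(2·log₂(1+√3))`: there is a tree size restriction `k` below this
bound for which Builder has a winning strategy in the deterministic `P_ℓ`-avoidance game
with 2 colors. -/
theorem statement6 (ℓ : ℕ) (hℓ : 1 ≤ ℓ) :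
    ∃ k : ℕ, BuilderWinsTree (SimpleGraph.pathGraph (ℓ + 1)) 2 k ∧
      (k : ℝ) ≤ (9 + 5 * Real.sqrt 3) / 6 *
        (ℓ : ℝ) ^ (2 * Real.logb 2 (1 + Real.sqrt 3)) := by
  set n := Nat.log 2 ℓ with hn
  have h1 : ℓ < 2 ^ (n + 1) := Nat.lt_pow_succ_log_self (by norm_num) ℓ
  have h2 : 2 ^ n ≤ ℓ := Nat.pow_log_le_self 2 (by omega)
  refine ⟨PathGame.hh (n + 1 + (n + 1)) - 1, PathGame.builder (n + 1) ℓ (by omega), ?_⟩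
  have hk : ((PathGame.hh (n + 1 + (n + 1)) - 1 : ℕ) : ℝ) ≤ PathGame.hh (n + 1 + (n + 1)) := by
    exact_mod_cast Nat.sub_le _ _
  refine (hk.trans (PathGame.hh_bound n)).trans ?_
  refine mul_le_mul_of_nonneg_left ?_ (by positivity)
  have hs : 0 < √3 := by positivity
  have hlog : 0 ≤ Real.logb 2 (1 + √3) := Real.logb_nonneg (by norm_num) (by linarith)
  have h2' : (2 : ℝ) ^ n ≤ ℓ := by exact_mod_cast h2
  refine le_trans (le_of_eq ?_) (Real.rpow_le_rpow (by positivity) h2' (by positivity))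
  rw [← Real.rpow_natCast 2 n, ← Real.rpow_mul (by norm_num),
    show (n : ℝ) * (2 * Real.logb 2 (1 + √3)) = Real.logb 2 (1 + √3) * ((2 * n : ℕ) : ℝ) by
      push_cast; ring, Real.rpow_mul (by norm_num),
    Real.rpow_logb (by norm_num) (by norm_num) (by linarith), Real.rpow_natCast, pow_mul]
end

section
/- Let C_ℓ denote the cycle with ℓ edges, where ℓ ≥ 3. Then Builder has a winning strategy in the deterministic C_ℓ-avoidance game with 2 colors and density restriction d = ℓ/(ℓ−1). -/
open SimpleGraph Filter Asymptotics
open scoped Classical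

section CycleGame

set_option linter.unusedSectionVars false

variable {V : Type} [DecidableEq V]

/-- Relative sparsity: the edges of `X` inside `S` are paid for by `S ∩ I`. -/
def SpQ (k : ℕ) (X : Finset (Sym2 V)) (I : Finset V) : Prop :=
  ∀ S : Finset V, k * (X ∩ S.sym2).card ≤ (k + 1) * (S ∩ I).card

def earE (t : ℕ) (a : ℕ → V) : Finset (Sym2 V) := (Finset.range t).image fun i => s(a i, a (i + 1))

def earI (t : ℕ) (a : ℕ → V) : Finset V := (Finset.Ico 1 t).image a

lemma mem_earE {t : ℕ} {a : ℕ → V} {e : Sym2 V} :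
    e ∈ earE t a ↔ ∃ i < t, s(a i, a (i + 1)) = e := by
  simp [earE]

lemma mem_earI {t : ℕ} {a : ℕ → V} {v : V} :
    v ∈ earI t a ↔ ∃ i, 1 ≤ i ∧ i < t ∧ a i = v := by
  simp [earI, and_assoc]

lemma SpQ.mono {k : ℕ} {X X' : Finset (Sym2 V)} {I I' : Finset V} (h : SpQ k X I)
    (hX : X' ⊆ X) (hI : I ⊆ I') : SpQ k X' I' := by
  intro S
  calc k * (X' ∩ S.sym2).card ≤ k * (X ∩ S.sym2).card := by gcongr
    _ ≤ _ := h S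
    _ ≤ _ := by gcongr

lemma SpQ.union {k : ℕ} {X Y : Finset (Sym2 V)} {I J : Finset V} (h : SpQ k X I)
    (h' : SpQ k Y J) (hd : Disjoint I J) : SpQ k (X ∪ Y) (I ∪ J) := by
  intro S
  have h1 : ((X ∪ Y) ∩ S.sym2).card ≤ (X ∩ S.sym2).card + (Y ∩ S.sym2).card := by
    rw [Finset.union_inter_distrib_right]; exact Finset.card_union_le _ _
  have h2 : (S ∩ (I ∪ J)).card = (S ∩ I).card + (S ∩ J).card := by
    rw [Finset.inter_union_distrib_left, Finset.card_union_of_disjoint]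
    exact hd.mono Finset.inter_subset_right Finset.inter_subset_right
  have := h S
  have := h' S
  rw [h2]
  nlinarith [Nat.mul_le_mul_left k h1]

lemma SpQ.empty (k : ℕ) (I : Finset V) : SpQ k ∅ I := by
  intro S; simp

lemma spQ_ear {k t : ℕ} {a : ℕ → V} (ht : k + 1 ≤ t)
    (hinj : ∀ i j, 1 ≤ i → i < t → 1 ≤ j → j < t → a i = a j → i = j) :
    SpQ k (earE t a) (earI t a) := by
  intro S
  by_cases hall : ∀ i, 1 ≤ i → i < t → a i ∈ S
  · have h1 : (earE t a ∩ S.sym2).card ≤ t := by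
      calc _ ≤ (earE t a).card := Finset.card_le_card Finset.inter_subset_left
        _ ≤ (Finset.range t).card := Finset.card_image_le
        _ = t := by simp
    have h2 : S ∩ earI t a = earI t a := by
      apply Finset.inter_eq_right.2
      intro v hv
      obtain ⟨i, h1, h2, rfl⟩ := mem_earI.1 hv
      exact hall i h1 h2
    have h3 : (earI t a).card = t - 1 := by
      unfold earI
      rw [Finset.card_image_of_injOn]
      · simp
      · intro i hi j hj hij
        simp only [Finset.coe_Ico, Set.mem_Ico] at hi hj
        exact hinj i j hi.1 hi.2 hj.1 hj.2 hij
    rw [h2, h3]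
    obtain ⟨s, rfl⟩ := Nat.exists_eq_add_of_le ht
    have : k + 1 + s - 1 = k + s := by omega
    rw [this]
    nlinarith [Nat.mul_le_mul_left k h1]
  · push Not at hall
    obtain ⟨j, hj1, hj2, hj⟩ := hall
    have key : (earE t a ∩ S.sym2).card ≤ (S ∩ earI t a).card := by
      have h1 : earE t a ∩ S.sym2 ⊆
          ((Finset.range t).filter (fun i => a i ∈ S ∧ a (i + 1) ∈ S)).image
            (fun i => s(a i, a (i + 1))) := by
        intro e he
        rw [Finset.mem_inter, mem_earE] at he
        obtain ⟨⟨i, hi, rfl⟩, he⟩ := he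
        simp only [Finset.mk_mem_sym2_iff] at he
        apply Finset.mem_image_of_mem (fun i => s(a i, a (i + 1)))
        simp [hi, he]
      refine (Finset.card_le_card h1).trans (Finset.card_image_le.trans ?_)
      have hne : ∀ i, a i ∈ S → i ≠ j := by rintro i hi rfl; exact hj hi
      apply Finset.card_le_card_of_injOn (fun i => if i < j then a (i + 1) else a i)
      · intro i hi
        simp only [Finset.coe_filter, Finset.mem_range, Set.mem_ofPred_eq] at hi
        have n1 := hne _ hi.2.1
        have n2 := hne _ hi.2.2
        simp only [Finset.coe_inter, Set.mem_inter_iff, Finset.mem_coe, mem_earI]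
        split_ifs with hij
        · exact ⟨hi.2.2, i + 1, by omega, by omega, rfl⟩
        · exact ⟨hi.2.1, i, by omega, by omega, rfl⟩
      · intro i hi i' hi' h
        simp only [Finset.coe_filter, Finset.mem_range, Set.mem_ofPred_eq] at hi hi'
        have n1 := hne _ hi.2.1
        have n2 := hne _ hi.2.2
        have n3 := hne _ hi'.2.1
        have n4 := hne _ hi'.2.2
        dsimp only at h
        split_ifs at h with h1 h2 h2
        · have := hinj _ _ (by omega) (by omega) (by omega) (by omega) h; omega
        · have := hinj _ _ (by omega) (by omega) (by omega) (by omega) h; omega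
        · have := hinj _ _ (by omega) (by omega) (by omega) (by omega) h; omega
        · have := hinj _ _ (by omega) (by omega) (by omega) (by omega) h; omega
    nlinarith [Nat.mul_le_mul_left k key]

lemma spQ_fam {k : ℕ} (J : Finset ℕ) (t : ℕ → ℕ) (a : ℕ → ℕ → V)
    (ht : ∀ j ∈ J, k + 1 ≤ t j)
    (hinj : ∀ j ∈ J, ∀ j' ∈ J, ∀ i i', 1 ≤ i → i < t j → 1 ≤ i' → i' < t j' →
      a j i = a j' i' → j = j' ∧ i = i') :
    SpQ k (J.biUnion fun j => earE (t j) (a j)) (J.biUnion fun j => earI (t j) (a j)) := by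
  induction J using Finset.induction_on with
  | empty => simpa using SpQ.empty k ∅
  | insert x J hx ih =>
    rw [Finset.biUnion_insert, Finset.biUnion_insert]
    apply SpQ.union
    · apply spQ_ear (ht x (Finset.mem_insert_self _ _))
      intro i j h1 h2 h3 h4 h
      exact (hinj x (Finset.mem_insert_self _ _) x (Finset.mem_insert_self _ _) i j h1 h2 h3 h4 h).2
    · apply ih
      · intro j hj; exact ht j (Finset.mem_insert_of_mem hj)
      · intro j hj j' hj'
        exact hinj j (Finset.mem_insert_of_mem hj) j' (Finset.mem_insert_of_mem hj')
    · rw [Finset.disjoint_left]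
      intro v hv hv'
      obtain ⟨i, h1, h2, rfl⟩ := mem_earI.1 hv
      rw [Finset.mem_biUnion] at hv'
      obtain ⟨j, hj, hv'⟩ := hv'
      obtain ⟨i', h3, h4, h5⟩ := mem_earI.1 hv'
      have := (hinj x (Finset.mem_insert_self _ _) j (Finset.mem_insert_of_mem hj)
        i i' h1 h2 h3 h4 h5.symm).1
      subst this
      exact hx hj

/-- `p` is an `n`-periodic parametrization of `n` distinct vertices. -/
def Cyc (n : ℕ) (p : ℕ → V) : Prop := ∀ i j, p i = p j ↔ i % n = j % n

lemma Cyc.inj {n : ℕ} {p : ℕ → V} (h : Cyc n p) {b i j : ℕ} (hi : i < n) (hj : j < n)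
    (e : p (b + i) = p (b + j)) : i = j := by
  have h1 : (b + i) ≡ (b + j) [MOD n] := (h _ _).1 e
  have h2 : i ≡ j [MOD n] := Nat.ModEq.add_left_cancel' b h1
  rwa [Nat.ModEq, Nat.mod_eq_of_lt hi, Nat.mod_eq_of_lt hj] at h2

lemma Cyc.window {n : ℕ} {p : ℕ → V} (h : Cyc n p) (hn : 0 < n) (b x : ℕ) :
    ∃ y < n, p (b + y) = p x ∧ p (b + y + 1) = p (x + 1) := by
  have key : (b + (x + b * (n - 1)) % n) ≡ x [MOD n] := by
    have h1 : (b + (x + b * (n - 1)) % n) ≡ b + (x + b * (n - 1)) [MOD n] :=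
      Nat.ModEq.add_left _ (Nat.mod_modEq _ _)
    have h2 : b + (x + b * (n - 1)) = x + b * n := by
      obtain ⟨m, rfl⟩ : ∃ m, n = m + 1 := ⟨n - 1, by omega⟩
      simp; ring
    rw [h2] at h1
    refine h1.trans ?_
    simp [Nat.ModEq]
  exact ⟨(x + b * (n - 1)) % n, Nat.mod_lt _ hn, (h _ _).2 key, (h _ _).2 (key.add_right 1)⟩

lemma Cyc.mem_earE {n : ℕ} {p : ℕ → V} (h : Cyc n p) (hn : 0 < n) (x : ℕ) :
    s(p x, p (x + 1)) ∈ earE n p := by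
  obtain ⟨y, hy, h1, h2⟩ := h.window hn 0 x
  rw [_root_.mem_earE]
  refine ⟨y, hy, ?_⟩
  simp only [zero_add] at h1 h2
  rw [h1, h2]

lemma spQ_cyc {k n : ℕ} {p : ℕ → V} (h : Cyc n p) :
    SpQ k (earE n p) ((Finset.range n).image p) := by
  intro S
  have key : (earE n p ∩ S.sym2).card ≤ (S ∩ (Finset.range n).image p).card := by
    have h1 : earE n p ∩ S.sym2 ⊆
        ((Finset.range n).filter (fun i => p i ∈ S)).image (fun i => s(p i, p (i + 1))) := by
      intro e he
      rw [Finset.mem_inter, mem_earE] at he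
      obtain ⟨⟨i, hi, rfl⟩, he⟩ := he
      simp only [Finset.mk_mem_sym2_iff] at he
      apply Finset.mem_image_of_mem (fun i => s(p i, p (i + 1)))
      simp [hi, he]
    refine (Finset.card_le_card h1).trans (Finset.card_image_le.trans ?_)
    apply Finset.card_le_card_of_injOn p
    · intro i hi
      simp only [Finset.coe_filter, Finset.mem_range, Set.mem_ofPred_eq] at hi
      simp only [Finset.coe_inter, Set.mem_inter_iff, Finset.mem_coe, Finset.mem_image,
        Finset.mem_range]
      exact ⟨hi.2, i, hi.1, rfl⟩
    · intro i hi j hj e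
      simp only [Finset.coe_filter, Finset.mem_range, Set.mem_ofPred_eq] at hi hj
      exact h.inj (b := 0) hi.1 hj.1 (by simpa using e)
  nlinarith [Nat.mul_le_mul_left k key]

lemma runPainterAux_append {r : ℕ} (π : PainterStrategy V r) (h : EdgeHistory V r)
    (l l' : List (Sym2 V)) :
    runPainterAux π h (l ++ l') = runPainterAux π (runPainterAux π h l) l' := by
  induction l generalizing h with
  | nil => rfl
  | cons e l ih => simp only [List.cons_append, runPainterAux]; exact ih _

lemma runPainter_snoc {r : ℕ} (π : PainterStrategy V r) (l : List (Sym2 V)) (e : Sym2 V) :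
    runPainter π (l ++ [e]) = runPainter π l ++ [(e, π (runPainter π l) e)] := by
  unfold runPainter
  rw [runPainterAux_append]; rfl

lemma runPainterAux_map_fst {r : ℕ} (π : PainterStrategy V r) (h : EdgeHistory V r)
    (l : List (Sym2 V)) : (runPainterAux π h l).map Prod.fst = h.map Prod.fst ++ l := by
  induction l generalizing h with
  | nil => simp [runPainterAux]
  | cons e l ih => simp only [runPainterAux]; rw [ih]; simp

/-- The density restriction for cycles of length `k+1`. -/
noncomputable def dens (k : ℕ) : ℝ := ((k + 1 : ℕ) : ℝ) / (((k + 1 : ℕ) : ℝ) - 1)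

/-- The colored edge sets `E 0, E 1` are reachable by Builder against `π`. -/
def RG (π : PainterStrategy V 2) (k : ℕ) (E : Fin 2 → Finset (Sym2 V)) : Prop :=
  ∃ l : List (Sym2 V), ValidEdgeSeq l ∧ (∀ i : ℕ, DensityLE (boardOf (l.take i)) (dens k)) ∧
    ∀ e χ, (e, χ) ∈ runPainter π l ↔ e ∈ E χ

lemma density_of_spQ {k : ℕ} (hk : 1 ≤ k) {T : Finset (Sym2 V)} {I : Finset V} (h : SpQ k T I)
    (l : List (Sym2 V)) (hl : ∀ e ∈ l, e ∈ T) : DensityLE (boardOf l) (dens k) := by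
  intro S _
  have h1 : edgesWithin (boardOf l) (↑S : Set V) ≤ (T ∩ S.sym2).card := by
    unfold edgesWithin
    rw [← Set.ncard_coe_finset]
    apply Set.ncard_le_ncard _ (Finset.finite_toSet _)
    rintro e ⟨he, he'⟩
    simp only [boardOf, SimpleGraph.edgeSet_fromEdgeSet] at he
    simp only [Finset.coe_inter, Set.mem_inter_iff, Finset.mem_coe]
    refine ⟨hl e he.1, ?_⟩
    rw [Finset.mem_sym2_iff]
    intro a ha
    exact he' a ha
  have h2 := h S
  have h3 : (S ∩ I).card ≤ S.card := Finset.card_le_card Finset.inter_subset_left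
  have h4 : k * edgesWithin (boardOf l) (↑S : Set V) ≤ (k + 1) * S.card :=
    (Nat.mul_le_mul_left k h1).trans (h2.trans (Nat.mul_le_mul_left _ h3))
  have hk' : (0 : ℝ) < k := by exact_mod_cast hk
  have h5 : (k : ℝ) * edgesWithin (boardOf l) (↑S : Set V) ≤ (k + 1) * S.card := by
    exact_mod_cast h4
  have hd : dens k = (k + 1) / k := by unfold dens; push_cast; ring_nf
  rw [hd, div_mul_eq_mul_div, le_div_iff₀ hk']
  linarith

lemma RG.step {π : PainterStrategy V 2} {k : ℕ} (hk : 1 ≤ k) {E : Fin 2 → Finset (Sym2 V)}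
    (h : RG π k E) (e : Sym2 V) (he : ¬ e.IsDiag) {T : Finset (Sym2 V)} {I : Finset V}
    (hT : SpQ k T I) (hE : ∀ c, E c ⊆ T) (heT : e ∈ T) :
    ∃ E' c, RG π k E' ∧ (∀ c, E c ⊆ E' c) ∧ e ∈ E' c ∧
      (∀ c, E' c ⊆ insert e (E 0 ∪ E 1)) := by
  have hsub : ∀ c, E c ⊆ E 0 ∪ E 1 := by
    intro c; fin_cases c
    · exact Finset.subset_union_left
    · exact Finset.subset_union_right
  by_cases hex : ∃ c, e ∈ E c
  · obtain ⟨c, hc⟩ := hex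
    exact ⟨E, c, h, fun _ => Finset.Subset.refl _, hc,
      fun c => (hsub c).trans (Finset.subset_insert _ _)⟩
  · push Not at hex
    obtain ⟨l, hv, hd, hl⟩ := h
    have hmap : (runPainter π l).map Prod.fst = l := by
      have := runPainterAux_map_fst π [] l
      simpa [runPainter] using this
    have hmem : ∀ f ∈ l, ∃ c, f ∈ E c := by
      intro f hf
      rw [← hmap, List.mem_map] at hf
      obtain ⟨⟨g, c⟩, hg, rfl⟩ := hf
      exact ⟨c, (hl _ _).1 hg⟩
    have hel : e ∉ l := by
      intro hh
      obtain ⟨c, hc⟩ := hmem e hh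
      exact hex c hc
    set c := π (runPainter π l) e with hc
    refine ⟨fun x => if x = c then insert e (E x) else E x, c, ⟨l ++ [e], ⟨?_, ?_⟩, ?_, ?_⟩,
      ?_, ?_, ?_⟩
    · rw [List.nodup_append]
      refine ⟨hv.1, by simp, ?_⟩
      intro a ha b hb
      simp only [List.mem_singleton] at hb
      rintro rfl
      subst hb
      exact hel ha
    · intro f hf
      simp only [List.mem_append, List.mem_singleton] at hf
      rcases hf with hf | rfl
      · exact hv.2 f hf
      · exact he
    · intro i
      apply density_of_spQ hk hT
      intro f hf
      have := List.mem_of_mem_take hf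
      simp only [List.mem_append, List.mem_singleton] at this
      rcases this with hf | rfl
      · obtain ⟨c, hc⟩ := hmem f hf
        exact hE c hc
      · exact heT
    · intro f χ
      rw [runPainter_snoc]
      simp only [List.mem_append, List.mem_singleton, Prod.mk.injEq, hl, ← hc]
      split_ifs with h1
      · simp [h1, or_comm]
      · simp [h1]
    · intro x
      dsimp only
      split_ifs
      · exact Finset.subset_insert _ _
      · exact Finset.Subset.refl _
    · simp
    · intro x
      dsimp only
      split_ifs
      · exact Finset.insert_subset_insert _ (hsub x)
      · exact (hsub x).trans (Finset.subset_insert _ _)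

/-- Builder can reach a monochromatic cycle of length `k+1`. -/
def Goal (π : PainterStrategy V 2) (k : ℕ) : Prop :=
  ∃ E χ p, RG π k E ∧ Cyc (k + 1) p ∧ earE (k + 1) p ⊆ E χ

def CycOk (k c : ℕ) (p : ℕ → V) (T : Finset (Sym2 V)) : Prop :=
  c = k ∨ ∃ Y I, T ⊆ earE (c + 1) p ∪ Y ∧ SpQ k Y I ∧ ∀ i, p i ∉ I

def Win (π : PainterStrategy V 2) (k c : ℕ) : Prop :=
  ∀ E χ p, RG π k E → Cyc (c + 1) p → earE (c + 1) p ⊆ E χ → CycOk k c p (E 0 ∪ E 1) → Goal π k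

lemma win_base (π : PainterStrategy V 2) (k : ℕ) : Win π k k :=
  fun E χ p h1 h2 h3 _ => ⟨E, χ, p, h1, h2, h3⟩

lemma CycOk.mono {k c : ℕ} {p : ℕ → V} {T T' : Finset (Sym2 V)} (h : CycOk k c p T)
    (hT : T' ⊆ T) : CycOk k c p T' := by
  rcases h with h | ⟨Y, I, h1, h2⟩
  · exact Or.inl h
  · exact Or.inr ⟨Y, I, hT.trans h1, h2⟩

lemma fin2_ne {a b : Fin 2} (h : a ≠ b) : a = 1 - b := by
  revert a b; decide

lemma path_cyc {c : ℕ} {P : ℕ → V} (h : ∀ i ≤ c, ∀ j ≤ c, P i = P j → i = j) :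
    Cyc (c + 1) (fun i => P (i % (c + 1))) := by
  intro i j
  constructor
  · intro e
    exact h _ (Nat.lt_succ_iff.1 (Nat.mod_lt _ (Nat.succ_pos _))) _
      (Nat.lt_succ_iff.1 (Nat.mod_lt _ (Nat.succ_pos _))) e
  · intro e
    simp only [e]

lemma polygon {π : PainterStrategy V 2} {k c c' : ℕ} (hk : 1 ≤ k) (hc' : 1 ≤ c')
    (hW : Win π k c) (hW' : Win π k c') {E : Fin 2 → Finset (Sym2 V)} {χ : Fin 2}
    (hE : RG π k E) {z : ℕ → V} (hz : Cyc (c' + 1) z) {P : ℕ → ℕ → V}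
    (hP0 : ∀ j, P j 0 = z j) (hPc : ∀ j, P j c = z (j + 1))
    (hPi : ∀ j, ∀ x ≤ c, ∀ y ≤ c, P j x = P j y → x = y)
    (hPE : ∀ j, earE c (P j) ⊆ E χ)
    {T : Finset (Sym2 V)} {I : Finset V} (hT : ∀ x, E x ⊆ T) (hzT : earE (c' + 1) z ⊆ T)
    (hQ : SpQ k T I)
    (hok : ∀ j, CycOk k c (fun i => P j (i % (c + 1))) T) (hok' : CycOk k c' z T) :
    Goal π k := by
  have claim : ∀ m, Goal π k ∨ ∃ E', RG π k E' ∧ (∀ x, E x ⊆ E' x) ∧ (∀ x, E' x ⊆ T) ∧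
      ∀ j < m, s(z j, z (j + 1)) ∈ E' (1 - χ) := by
    intro m
    induction m with
    | zero => exact Or.inr ⟨E, hE, fun _ => Finset.Subset.refl _, hT, by simp⟩
    | succ m ih =>
      rcases ih with ih | ⟨E', h1, h2, h3, h4⟩
      · exact Or.inl ih
      have hm : s(z m, z (m + 1)) ∈ T := hzT (hz.mem_earE (Nat.succ_pos _) m)
      have hnd : ¬ (s(z m, z (m + 1))).IsDiag := by
        rw [Sym2.mk_isDiag_iff]
        intro e
        have := hz.inj (b := m) (i := 0) (j := 1) (by omega) (by omega) e
        omega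
      obtain ⟨E'', x, g1, g2, g3, g4⟩ := h1.step hk _ hnd hQ h3 hm
      have g5 : ∀ y, E'' y ⊆ T := by
        intro y
        refine (g4 y).trans (Finset.insert_subset hm (Finset.union_subset (h3 0) (h3 1)))
      by_cases hx : x = χ
      · left
        subst hx
        refine hW E'' x _ g1 (path_cyc (hPi m)) ?_
          ((hok m).mono (Finset.union_subset (g5 0) (g5 1)))
        intro e he
        rw [mem_earE] at he
        obtain ⟨i, hi, rfl⟩ := he
        rcases Nat.lt_succ_iff_lt_or_eq.1 hi with hi' | rfl
        · apply g2; apply h2; apply hPE m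
          rw [mem_earE]
          refine ⟨i, hi', ?_⟩
          rw [Nat.mod_eq_of_lt hi, Nat.mod_eq_of_lt (by omega)]
        · rw [Nat.mod_eq_of_lt hi, Nat.mod_self, hP0, hPc, Sym2.eq_swap]
          exact g3
      · right
        have hx' := fin2_ne hx
        subst hx'
        refine ⟨E'', g1, fun y => (h2 y).trans (g2 y), g5, ?_⟩
        intro j hj
        rcases Nat.lt_succ_iff_lt_or_eq.1 hj with hj' | rfl
        · exact g2 _ (h4 j hj')
        · exact g3
  rcases claim (c' + 1) with h | ⟨E', h1, h2, h3, h4⟩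
  · exact h
  · refine hW' E' (1 - χ) z h1 hz ?_ (hok'.mono (Finset.union_subset (h3 0) (h3 1)))
    intro e he
    rw [mem_earE] at he
    obtain ⟨i, hi, rfl⟩ := he
    exact h4 i hi

lemma digits_inj {c j x j' x' : ℕ} (hx : x < c) (hx' : x' < c) (h : j * c + x = j' * c + x') :
    j = j' ∧ x = x' := by
  have hc : 0 < c := by omega
  have h1 : (j * c + x) / c = j := by
    rw [mul_comm, Nat.mul_add_div hc, Nat.div_eq_of_lt hx, add_zero]
  have h2 : (j' * c + x') / c = j' := by
    rw [mul_comm, Nat.mul_add_div hc, Nat.div_eq_of_lt hx', add_zero]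
  have : j = j' := by rw [← h1, ← h2, h]
  subst this
  exact ⟨rfl, by omega⟩

lemma digits_lt {c j x : ℕ} (hj : j ≤ c) (hx : x < c) : j * c + x < c * (c + 1) := by
  have := Nat.mul_le_mul_right c hj
  have : c * (c + 1) = c * c + c := by ring
  omega

lemma Cyc.digits {c : ℕ} {p : ℕ → V} (h : Cyc (c * (c + 1)) p) {b j x j' x' : ℕ}
    (hj : j ≤ c) (hj' : j' ≤ c) (hx : x < c) (hx' : x' < c)
    (e : p (b + (j * c + x)) = p (b + (j' * c + x'))) : j = j' ∧ x = x' :=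
  digits_inj hx hx' (h.inj (digits_lt hj hx) (digits_lt hj' hx') e)

lemma earE_win {n b : ℕ} {p : ℕ → V} (h : Cyc n p) {e : Sym2 V} (he : e ∈ earE n p) :
    ∃ y < n, s(p (b + y), p (b + y + 1)) = e := by
  obtain ⟨x, hx, rfl⟩ := mem_earE.1 he
  obtain ⟨y, hy, h1, h2⟩ := h.window (by omega) b x
  exact ⟨y, hy, by rw [h1, h2]⟩

lemma win_step {π : PainterStrategy V 2} {k c c2 : ℕ} (hk : 2 ≤ k) (hc : c = k ∨ k + 1 ≤ c)
    (hW : Win π k c) (h2 : c2 + 1 = c * (c + 1)) : Win π k c2 := by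
  intro E χ p hE hp hpE hok
  rw [h2] at hp hpE
  have hc2 : 2 ≤ c := by omega
  rcases hok with rfl | ⟨Y, I, hT, hY, hI⟩
  · exfalso
    rcases hc with rfl | hc
    · nlinarith
    · nlinarith
  rw [h2] at hT
  set n := c * (c + 1) with hn
  have hn0 : 0 < n := by positivity
  set z : ℕ → V := fun j => p (j * c) with hzdef
  have hz : Cyc (c + 1) z := by
    intro i j
    rw [hzdef]
    simp only
    rw [hp, hn, mul_comm c (c + 1), Nat.mul_mod_mul_right, Nat.mul_mod_mul_right]
    constructor
    · intro h; exact Nat.eq_of_mul_eq_mul_right (by omega) h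
    · intro h; rw [h]
  set T := earE n p ∪ Y ∪ earE (c + 1) z with hTdef
  have hpr : ∀ j i, p (j * c + i) = p (0 + (j * c + i)) := by intro j i; rw [zero_add]
  -- generic disjointness
  have hdisj : ∀ (J : Finset ℕ) (t : ℕ → ℕ) (a : ℕ → ℕ → V), (∀ j i, ∃ x, a j i = p x) →
      Disjoint (J.biUnion fun j => earI (t j) (a j)) I := by
    intro J t a ha
    rw [Finset.disjoint_left]
    intro v hv hv'
    obtain ⟨j, _, hv⟩ := Finset.mem_biUnion.1 hv
    obtain ⟨i, _, _, rfl⟩ := mem_earI.1 hv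
    obtain ⟨x, hx⟩ := ha j i
    rw [hx] at hv'
    exact hI x hv'
  have hQ : ∃ I', SpQ k T I' := by
    refine ⟨_, ((spQ_fam (k := k) (Finset.range (c + 1)) (fun _ => c + 1)
      (fun j i => if i = 0 then p ((j + 1) * c) else p (j * c + (i - 1))) ?_ ?_).union hY
        (hdisj _ _ _ ?_)).mono ?_ (Finset.Subset.refl _)⟩
    · intro j _; omega
    · intro j hj j' hj' i i' h1 h2 h3 h4 h
      simp only [Finset.mem_range] at hj hj'
      rw [if_neg (by omega), if_neg (by omega), hpr, hpr j'] at h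
      have := hp.digits (by omega) (by omega) (by omega) (by omega) h
      omega
    · intro j i
      split_ifs
      · exact ⟨_, rfl⟩
      · exact ⟨_, rfl⟩
    · intro e he
      rw [hTdef, Finset.mem_union, Finset.mem_union] at he
      rw [Finset.mem_union, Finset.mem_biUnion]
      rcases he with (he | he) | he
      · left
        obtain ⟨x, hx, rfl⟩ := mem_earE.1 he
        have hx' : c * (x / c) + x % c = x := Nat.div_add_mod x c
        have hm := Nat.mod_lt x (show 0 < c by omega)
        refine ⟨x / c, ?_, ?_⟩
        · rw [Finset.mem_range]; exact Nat.div_lt_of_lt_mul hx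
        · rw [mem_earE]
          refine ⟨x % c + 1, by omega, ?_⟩
          rw [if_neg (by omega), if_neg (by omega)]
          have e1 : x / c * c + (x % c + 1 - 1) = x := by rw [mul_comm]; omega
          have e2 : x / c * c + (x % c + 1 + 1 - 1) = x + 1 := by rw [mul_comm]; omega
          rw [e1, e2]
      · right; exact he
      · left
        obtain ⟨x, hx, rfl⟩ := mem_earE.1 he
        refine ⟨x, Finset.mem_range.2 hx, ?_⟩
        rw [mem_earE]
        refine ⟨0, by omega, ?_⟩
        simp only [hzdef, if_true]
        rw [Sym2.eq_swap]; simp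
  obtain ⟨I', hQ⟩ := hQ
  refine polygon (P := fun j i => p (j * c + i)) (z := z) (T := T) (χ := χ) (by omega) (by omega)
    hW hW hE hz ?_ ?_ ?_ ?_ ?_ ?_ hQ ?_ ?_
  · intro j; simp [hzdef]
  · intro j; simp only [hzdef]; congr 1; ring
  · intro j x hx y hy h
    have : c < n := by rw [hn]; nlinarith
    exact hp.inj (by omega) (by omega) h
  · intro j e he
    obtain ⟨x, hx, rfl⟩ := mem_earE.1 he
    exact hpE (hp.mem_earE hn0 _)
  · intro x e he
    rw [hTdef]
    apply Finset.mem_union_left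
    apply hT
    rw [Finset.mem_union]
    rcases Fin.exists_fin_two.1 ⟨x, rfl⟩ with h | h
    · left; rw [h] at he; exact he
    · right; rw [h] at he; exact he
  · exact Finset.subset_union_right
  · intro j0
    rcases hc with hc | hc
    · left; exact hc
    right
    refine ⟨_, _, ?_, (spQ_fam (k := k) (Finset.range (c + 1)) (fun _ => c)
      (fun j i => if j = 0 then p (j0 * c + ((i + 1) * c + 0)) else p (j0 * c + (j * c + i))) ?_ ?_).union hY
        (hdisj _ _ _ ?_), ?_⟩
    · intro e he
      rw [hTdef, Finset.mem_union, Finset.mem_union] at he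
      rw [Finset.mem_union, Finset.mem_union, Finset.mem_biUnion]
      rcases he with (he | he) | he
      · obtain ⟨x, hx, rfl⟩ := earE_win (b := j0 * c) hp he
        have hx' : c * (x / c) + x % c = x := Nat.div_add_mod x c
        have hm := Nat.mod_lt x (show 0 < c by omega)
        by_cases h0 : x / c = 0
        · left
          rw [mem_earE]
          rw [h0] at hx'
          refine ⟨x, by omega, ?_⟩
          rw [Nat.mod_eq_of_lt (by omega), Nat.mod_eq_of_lt (by omega)]; rfl
        · right; left
          refine ⟨x / c, ?_, ?_⟩
          · rw [Finset.mem_range]; exact Nat.div_lt_of_lt_mul hx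
          · rw [mem_earE]
            refine ⟨x % c, by omega, ?_⟩
            rw [if_neg h0, if_neg h0]
            have e1 : x / c * c + x % c = x := by rw [mul_comm]; omega
            rw [← add_assoc (x / c * c), e1, ← add_assoc]
      · right; right; exact he
      · obtain ⟨x, hx, rfl⟩ := earE_win (b := j0) hz he
        by_cases h0 : x = 0
        · left
          subst h0
          rw [mem_earE]
          refine ⟨c, by omega, ?_⟩
          rw [Nat.mod_eq_of_lt (by omega), Nat.mod_self, Sym2.eq_swap]
          simp only [hzdef, add_zero, add_mul, one_mul]
        · right; left
          refine ⟨0, by simp, ?_⟩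
          rw [mem_earE]
          refine ⟨x - 1, by omega, ?_⟩
          obtain ⟨y, rfl⟩ : ∃ y, x = y + 1 := ⟨x - 1, by omega⟩
          simp only [if_true, hzdef, Nat.add_sub_cancel, add_zero]
          congr 2
          · ring
          · ring
    · intro j _; omega
    · intro j hj j' hj' i i' h1 h2 h3 h4 h
      simp only [Finset.mem_range] at hj hj'
      split_ifs at h
      · have := hp.digits (by omega) (by omega) (by omega) (by omega) h
        omega
      · have := hp.digits (by omega) (by omega) (by omega) (by omega) h
        omega
      · have := hp.digits (by omega) (by omega) (by omega) (by omega) h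
        omega
      · have := hp.digits (by omega) (by omega) (by omega) (by omega) h
        omega
    · intro j i
      split_ifs
      · exact ⟨_, rfl⟩
      · exact ⟨_, rfl⟩
    · intro i hi
      rw [Finset.mem_union] at hi
      rcases hi with hi | hi
      · obtain ⟨j, hj, hi⟩ := Finset.mem_biUnion.1 hi
        rw [Finset.mem_range] at hj
        obtain ⟨x, hx1, hx2, hx⟩ := mem_earI.1 hi
        have hm := Nat.mod_lt i (show 0 < c + 1 by omega)
        obtain ⟨q, y, hqy, hy, hq⟩ : ∃ q y, i % (c + 1) = q * c + y ∧ y < c ∧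
            (q = 0 ∨ (q = 1 ∧ y = 0)) := by
          by_cases h : i % (c + 1) = c
          · exact ⟨1, 0, by omega, by omega, by omega⟩
          · exact ⟨0, i % (c + 1), by omega, by omega, by omega⟩
        simp only [hqy] at hx
        split_ifs at hx
        · have := hp.digits (by omega) (by omega) (by omega) (by omega) hx
          omega
        · have := hp.digits (by omega) (by omega) (by omega) (by omega) hx
          omega
      · exact hI _ hi
  · rcases hc with hc | hc
    · left; exact hc
    right
    refine ⟨_, _, ?_, (spQ_fam (k := k) (Finset.range (c + 1)) (fun _ => c)
      (fun j i => p (j * c + i)) ?_ ?_).union hY (hdisj _ _ _ ?_), ?_⟩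
    · intro e he
      rw [hTdef, Finset.mem_union, Finset.mem_union] at he
      rw [Finset.mem_union, Finset.mem_union, Finset.mem_biUnion]
      rcases he with (he | he) | he
      · obtain ⟨x, hx, rfl⟩ := mem_earE.1 he
        have hx' : c * (x / c) + x % c = x := Nat.div_add_mod x c
        have hm := Nat.mod_lt x (show 0 < c by omega)
        right; left
        refine ⟨x / c, ?_, ?_⟩
        · rw [Finset.mem_range]; exact Nat.div_lt_of_lt_mul hx
        · rw [mem_earE]
          refine ⟨x % c, by omega, ?_⟩
          have e1 : x / c * c + x % c = x := by rw [mul_comm]; omega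
          rw [← add_assoc (x / c * c), e1]
      · right; right; exact he
      · left; exact he
    · intro j _; omega
    · intro j hj j' hj' i i' h1 h2 h3 h4 h
      simp only [Finset.mem_range] at hj hj'
      rw [hpr, hpr j'] at h
      have := hp.digits (by omega) (by omega) (by omega) (by omega) h
      omega
    · intro j i; exact ⟨_, rfl⟩
    · intro i hi
      rw [Finset.mem_union] at hi
      rcases hi with hi | hi
      · obtain ⟨j, hj, hi⟩ := Finset.mem_biUnion.1 hi
        rw [Finset.mem_range] at hj
        obtain ⟨x, hx1, hx2, hx⟩ := mem_earI.1 hi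
        have hm := Nat.mod_lt i (show 0 < c + 1 by omega)
        have hzi : z i = p (0 + (i % (c + 1) * c + 0)) := by
          have : z i = z (i % (c + 1)) := (hz _ _).2 (by simp)
          rw [this]; simp [hzdef]
        rw [hzi, hpr] at hx
        have := hp.digits (by omega) (by omega) (by omega) (by omega) hx
        omega
      · exact hI _ hi

lemma mod_shift {n b x y : ℕ} (hx : x < n) (hy : y < n) (h : (b + x) % n = (b + y) % n) :
    x = y := by
  have h2 : x ≡ y [MOD n] := Nat.ModEq.add_left_cancel' b h
  rwa [Nat.ModEq, Nat.mod_eq_of_lt hx, Nat.mod_eq_of_lt hy] at h2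

lemma mod_window {n : ℕ} (hn : 0 < n) (b x : ℕ) : ∃ y < n, (b + y) % n = x % n := by
  have h : Cyc n (fun i => i % n) := fun i j => Iff.rfl
  obtain ⟨y, hy, h1, _⟩ := h.window hn b x
  exact ⟨y, hy, h1⟩

lemma spider {π : PainterStrategy V 2} {k D m : ℕ} (hk : 2 ≤ k) (hD : k + 1 ≤ D)
    (hD2 : D % 2 = 1) (hm : k + 1 ≤ m) (hWD : Win π k D) (hWE : Win π k (2 * m + 1))
    {E : Fin 2 → Finset (Sym2 V)} {χ : Fin 2} (hE : RG π k E) {M : ℕ → ℕ → V} {r : V}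
    {H : ℕ → ℕ} (hH : ∀ j, H j = if j % 2 = 0 then m else m + 1)
    (hper : ∀ j j' i, j % (D + 1) = j' % (D + 1) → M j i = M j' i)
    (h0 : ∀ j, M j 0 = r)
    (hM : ∀ j j' i i', i ≤ m + 1 → i' ≤ m + 1 → M j i = M j' i' →
      i = i' ∧ (i = 0 ∨ j % (D + 1) = j' % (D + 1)))
    (hME : ∀ j, earE (H j) (M j) ⊆ E χ)
    {Y : Finset (Sym2 V)} {I : Finset V} (hY : SpQ k Y I)
    (hEY : E 0 ∪ E 1 ⊆ ((Finset.range (D + 1)).biUnion fun j => earE (H j) (M j)) ∪ Y)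
    (hI : ∀ j i, i ≤ H j → M j i ∉ I) : Goal π k := by
  have hHm : ∀ j, m ≤ H j ∧ H j ≤ m + 1 := by intro j; rw [hH]; split_ifs <;> omega
  have hHs : ∀ j, H j + H (j + 1) = 2 * m + 1 := by
    intro j; rw [hH, hH]; split_ifs <;> omega
  have hHper : ∀ j j', j % (D + 1) = j' % (D + 1) → H j = H j' := by
    intro j j' h
    have h2 : 2 ∣ D + 1 := by omega
    have h3 : j % 2 = j' % 2 := by
      rw [← Nat.mod_mod_of_dvd j h2, ← Nat.mod_mod_of_dvd j' h2, h]
    rw [hH, hH, h3]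
  set n := D + 1 with hn
  have hMd : ∀ b x y i i', x < n → y < n → i ≤ m + 1 → i' ≤ m + 1 → M (b + x) i = M (b + y) i' →
      i = i' ∧ (i = 0 ∨ x = y) := by
    intro b x y i i' hx hy hi hi' h
    obtain ⟨h1, h2⟩ := hM _ _ _ _ hi hi' h
    refine ⟨h1, ?_⟩
    rcases h2 with h2 | h2
    · left; exact h2
    · right; exact mod_shift hx hy h2
  set c := 2 * m + 1 with hc
  set z : ℕ → V := fun j => M j (H j) with hzdef
  have hz : Cyc n z := by
    intro i j
    constructor
    · intro h
      have hi := hHm i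
      have hj := hHm j
      rcases (hM _ _ _ _ hi.2 hj.2 h).2 with h | h
      · omega
      · exact h
    · intro h
      simp only [hzdef]
      rw [hHper i j h, hper i j _ h]
  set P : ℕ → ℕ → V := fun j i => if i ≤ H j then M j (H j - i) else M (j + 1) (i - H j) with hPdef
  have hPv : ∀ j x, x ≤ c → (∃ y, P j x = M (j + 0) y ∧ x + y = H j) ∨
      (∃ y, 1 ≤ y ∧ y ≤ H (j + 1) ∧ P j x = M (j + 1) y ∧ x = H j + y) := by
    intro j x hx
    have := hHs j
    simp only [hPdef]
    split_ifs with h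
    · left; exact ⟨H j - x, rfl, by omega⟩
    · right; exact ⟨x - H j, by omega, by omega, rfl, by omega⟩
  have hP0 : ∀ j y, y ≤ H j → P j (H j - y) = M j y := by
    intro j y hy
    simp only [hPdef]
    rw [if_pos (by omega)]; congr 1; omega
  have hP1 : ∀ j y, P j (H j + y) = M (j + 1) y := by
    intro j y
    simp only [hPdef]
    split_ifs with h
    · have : y = 0 := by omega
      subst this; rw [h0]; simp [h0]
    · congr 1; omega
  have hPi : ∀ j, ∀ x ≤ c, ∀ y ≤ c, P j x = P j y → x = y := by
    intro j x hx y hy h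
    have h1 := hHm j
    have h2 := hHm (j + 1)
    rcases hPv j x hx with ⟨x', e, hx'⟩ | ⟨x', hx1, hx2, e, hx'⟩ <;>
    rcases hPv j y hy with ⟨y', e', hy'⟩ | ⟨y', hy1, hy2, e', hy'⟩
    · rw [e, e'] at h
      have := hMd _ _ _ _ _ (by omega) (by omega) (by omega) (by omega) h
      omega
    · rw [e, e'] at h
      have := hMd _ _ _ _ _ (by omega) (by omega) (by omega) (by omega) h
      omega
    · rw [e, e'] at h
      have := hMd _ _ _ _ _ (by omega) (by omega) (by omega) (by omega) h
      omega
    · rw [e, e'] at h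
      have := hMd _ _ _ _ _ (by omega) (by omega) (by omega) (by omega) h
      omega
  have hPe : ∀ j, earE c (P j) ⊆ earE (H j) (M j) ∪ earE (H (j + 1)) (M (j + 1)) := by
    intro j e he
    obtain ⟨i, hi, rfl⟩ := mem_earE.1 he
    have := hHs j
    rw [Finset.mem_union, mem_earE, mem_earE]
    by_cases h : i + 1 ≤ H j
    · left
      refine ⟨H j - (i + 1), by omega, ?_⟩
      have e1 := hP0 j (H j - (i + 1)) (by omega)
      have e2 := hP0 j (H j - (i + 1) + 1) (by omega)
      rw [← e1, ← e2, Sym2.eq_swap]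
      congr 2
      · congr 1; omega
      · congr 1; omega
    · right
      refine ⟨i - H j, by omega, ?_⟩
      have e1 : H j + (i - H j) = i := by omega
      have e2 : H j + (i - H j + 1) = i + 1 := by omega
      rw [← hP1, ← hP1, e1, e2]
  have hPe0 : ∀ j, earE (H j) (M j) ⊆ earE c (P j) := by
    intro j e he
    obtain ⟨i, hi, rfl⟩ := mem_earE.1 he
    have := hHs j
    rw [mem_earE]
    refine ⟨H j - (i + 1), by omega, ?_⟩
    rw [← hP0 j i (by omega), ← hP0 j (i + 1) (by omega), Sym2.eq_swap]
    congr 2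
    congr 1; omega
  have hPe1 : ∀ j, earE (H (j + 1)) (M (j + 1)) ⊆ earE c (P j) := by
    intro j e he
    obtain ⟨i, hi, rfl⟩ := mem_earE.1 he
    have := hHs j
    rw [mem_earE]
    refine ⟨H j + i, by omega, ?_⟩
    rw [← hP1 j i, ← hP1 j (i + 1)]
    rfl
  have hPc : ∀ j, earE c (P j) ⊆ earE (c + 1) (fun i => P j (i % (c + 1))) := by
    intro j e he
    obtain ⟨i, hi, rfl⟩ := mem_earE.1 he
    rw [mem_earE]
    refine ⟨i, by omega, ?_⟩
    rw [Nat.mod_eq_of_lt (by omega), Nat.mod_eq_of_lt (by omega)]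
  have hPI : ∀ j x, x ≤ c → P j x ∉ I := by
    intro j x hx
    rcases hPv j x hx with ⟨y, e, hy⟩ | ⟨y, h1, h2, e, hy⟩
    · rw [e]; exact hI _ _ (by rw [add_zero]; omega)
    · rw [e]; exact hI _ _ h2
  have hPz : ∀ j, P j c = z (j + 1) := by
    intro j
    have := hHs j
    simp only [hzdef]
    rw [← hP1 j, this]
  have hPz0 : ∀ j, P j 0 = z j := by
    intro j
    have := hP0 j (H j) le_rfl
    rw [Nat.sub_self] at this
    exact this
  set T := ((Finset.range n).biUnion fun j => earE (H j) (M j)) ∪ Y ∪ earE n z with hTdef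
  have hok : ∀ j0, CycOk k c (fun i => P j0 (i % (c + 1))) T := by
    intro j0
    right
    refine ⟨_, _, ?_, (spQ_fam (k := k) ((Finset.range n).erase 1)
      (fun j => if j = 0 then D else H (j0 + j))
      (fun j i => if j = 0 then z (j0 + (1 + i)) else M (j0 + j) i) ?_ ?_).union hY ?_, ?_⟩
    · intro e he
      rw [hTdef, Finset.mem_union, Finset.mem_union] at he
      rw [Finset.mem_union, Finset.mem_union, Finset.mem_biUnion]
      rcases he with (he | he) | he
      · obtain ⟨j, hj, he⟩ := Finset.mem_biUnion.1 he
        obtain ⟨y, hy, hyj⟩ := mod_window (n := n) (by omega) j0 j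
        have : earE (H j) (M j) = earE (H (j0 + y)) (M (j0 + y)) := by
          rw [hHper _ _ hyj]
          have : M j = M (j0 + y) := by ext i; exact (hper _ _ _ hyj).symm
          rw [this]
        rw [this] at he
        by_cases y0 : y = 0
        · left
          subst y0
          exact hPc _ (hPe0 _ he)
        by_cases y1 : y = 1
        · left
          subst y1
          exact hPc _ (hPe1 _ he)
        right; left
        refine ⟨y, by simp [y1, hy], ?_⟩
        simp only [if_neg y0]
        exact he
      · right; right; exact he
      · obtain ⟨y, hy, rfl⟩ := earE_win (b := j0) hz he
        by_cases y0 : y = 0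
        · left
          subst y0
          rw [mem_earE]
          refine ⟨c, by omega, ?_⟩
          rw [Nat.mod_eq_of_lt (by omega), Nat.mod_self, Sym2.eq_swap, hPz0, hPz]
          rfl
        · right; left
          refine ⟨0, by simp; omega, ?_⟩
          rw [mem_earE]
          refine ⟨y - 1, by simp; omega, ?_⟩
          simp only [if_true]
          have e1 : j0 + (1 + (y - 1)) = j0 + y := by omega
          have e2 : j0 + (1 + (y - 1 + 1)) = j0 + y + 1 := by omega
          rw [e1, e2]
    · intro j hj
      have := hHm (j0 + j)
      split_ifs <;> omega
    · intro j hj j' hj' i i' h1 h2 h3 h4 h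
      simp only [Finset.mem_erase, Finset.mem_range] at hj hj'
      have a1 := hHm (j0 + j)
      have a2 := hHm (j0 + j')
      have a3 := hHm (j0 + (1 + i))
      have a4 := hHm (j0 + (1 + i'))
      simp only [hzdef] at h
      split_ifs at h h2 h4
      · have := hMd _ _ _ _ _ (by omega) (by omega) (by omega) (by omega) h
        omega
      · have := hMd _ _ _ _ _ (by omega) (by omega) (by omega) (by omega) h
        obtain ⟨e1, e2⟩ := this
        have e3 : 1 + i = j' := by omega
        rw [e3] at e1
        omega
      · have := hMd _ _ _ _ _ (by omega) (by omega) (by omega) (by omega) h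
        obtain ⟨e1, e2⟩ := this
        have e3 : 1 + i' = j := by omega
        rw [e3] at e1
        omega
      · have := hMd _ _ _ _ _ (by omega) (by omega) (by omega) (by omega) h
        omega
    · rw [Finset.disjoint_left]
      intro v hv hv'
      obtain ⟨j, _, hv⟩ := Finset.mem_biUnion.1 hv
      obtain ⟨i, _, hi, rfl⟩ := mem_earI.1 hv
      split_ifs at hv' hi
      · exact hI _ _ le_rfl hv'
      · exact hI _ _ hi.le hv'
    · intro i hi
      have hm := Nat.mod_lt i (show 0 < c + 1 by omega)
      rw [Finset.mem_union] at hi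
      rcases hi with hi | hi
      · obtain ⟨j, hj, hi⟩ := Finset.mem_biUnion.1 hi
        simp only [Finset.mem_erase, Finset.mem_range] at hj
        obtain ⟨x, hx1, hx2, hx⟩ := mem_earI.1 hi
        have a1 := hHm (j0 + j)
        have a2 := hHm (j0 + (1 + x))
        have a3 := hHm j0
        have a4 := hHm (j0 + 1)
        simp only [hzdef] at hx
        rcases hPv j0 (i % (c + 1)) (by omega) with ⟨y, e, hy⟩ | ⟨y, hy1, hy2, e, hy⟩
        · rw [e] at hx
          split_ifs at hx hx2
          · have := hMd _ _ _ _ _ (by omega) (by omega) (by omega) (by omega) hx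
            omega
          · have := hMd _ _ _ _ _ (by omega) (by omega) (by omega) (by omega) hx
            omega
        · rw [e] at hx
          split_ifs at hx hx2
          · have := hMd _ _ _ _ _ (by omega) (by omega) (by omega) (by omega) hx
            omega
          · have := hMd _ _ _ _ _ (by omega) (by omega) (by omega) (by omega) hx
            omega
      · exact hPI _ _ (by omega) hi
  have hok' : ∃ Y I, T ⊆ earE (D + 1) z ∪ Y ∧ SpQ k Y I ∧ ∀ i, z i ∉ I := by
    refine ⟨_, _, ?_, (spQ_fam (k := k) ((Finset.range n).erase 1)
      (fun j => if j = 0 then c else H j)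
      (fun j i => if j = 0 then P 0 i else M (0 + j) i) ?_ ?_).union hY ?_, ?_⟩
    · intro e he
      rw [hTdef, Finset.mem_union, Finset.mem_union] at he
      rw [Finset.mem_union, Finset.mem_union, Finset.mem_biUnion]
      rcases he with (he | he) | he
      · obtain ⟨y, hy, he⟩ := Finset.mem_biUnion.1 he
        rw [Finset.mem_range] at hy
        right; left
        by_cases y0 : y = 0
        · subst y0
          refine ⟨0, by simp; omega, ?_⟩
          simp only [if_true]
          exact hPe0 _ he
        by_cases y1 : y = 1
        · subst y1
          refine ⟨0, by simp; omega, ?_⟩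
          simp only [if_true]
          exact hPe1 0 he
        refine ⟨y, by simp [y1, hy], ?_⟩
        simp only [if_neg y0, zero_add]
        exact he
      · right; right; exact he
      · left; exact he
    · intro j hj
      have := hHm j
      split_ifs <;> omega
    · intro j hj j' hj' i i' h1 h2 h3 h4 h
      simp only [Finset.mem_erase, Finset.mem_range] at hj hj'
      have a1 := hHm j
      have a2 := hHm j'
      have a3 := hHm 0
      have a4 := hHm (0 + 1)
      split_ifs at h h2 h4
      · have := hPi 0 _ (by omega) _ (by omega) h
        omega
      · rcases hPv 0 i (by omega) with ⟨y, e, hy⟩ | ⟨y, hy1, hy2, e, hy⟩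
        · rw [e] at h
          have := hMd _ _ _ _ _ (by omega) (by omega) (by omega) (by omega) h
          omega
        · rw [e] at h
          have := hMd _ _ _ _ _ (by omega) (by omega) (by omega) (by omega) h
          omega
      · rcases hPv 0 i' (by omega) with ⟨y, e, hy⟩ | ⟨y, hy1, hy2, e, hy⟩
        · rw [e] at h
          have := hMd _ _ _ _ _ (by omega) (by omega) (by omega) (by omega) h
          omega
        · rw [e] at h
          have := hMd _ _ _ _ _ (by omega) (by omega) (by omega) (by omega) h
          omega
      · have := hMd _ _ _ _ _ (by omega) (by omega) (by omega) (by omega) h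
        omega
    · rw [Finset.disjoint_left]
      intro v hv hv'
      obtain ⟨j, _, hv⟩ := Finset.mem_biUnion.1 hv
      obtain ⟨i, _, hi, rfl⟩ := mem_earI.1 hv
      split_ifs at hv' hi
      · exact hPI _ _ hi.le hv'
      · exact hI _ _ (by rw [zero_add]; exact hi.le) hv'
    · intro w hi
      obtain ⟨i, hin, hiw⟩ : ∃ i < n, z w = z i :=
        ⟨w % n, Nat.mod_lt _ (by omega), (hz _ _).2 (by simp)⟩
      rw [hiw] at hi
      rw [Finset.mem_union] at hi
      rcases hi with hi | hi
      · obtain ⟨j, hj, hi⟩ := Finset.mem_biUnion.1 hi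
        simp only [Finset.mem_erase, Finset.mem_range] at hj
        obtain ⟨x, hx1, hx2, hx⟩ := mem_earI.1 hi
        have a1 := hHm j
        have a2 := hHm i
        have a3 := hHm 0
        have a4 := hHm (0 + 1)
        have a5 := hHs 0
        have hzi : z i = M (0 + i) (H i) := by rw [zero_add]
        rw [hzi] at hx
        split_ifs at hx hx2
        · rcases hPv 0 x (by omega) with ⟨y, e, hy⟩ | ⟨y, hy1, hy2, e, hy⟩
          · rw [e] at hx
            obtain ⟨e1, e2⟩ := hMd _ _ _ _ _ (by omega) (by omega) (by omega) (by omega) hx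
            have e3 : i = 0 := by omega
            rw [e3] at e1
            omega
          · rw [e] at hx
            obtain ⟨e1, e2⟩ := hMd 0 1 _ _ _ (by omega) (by omega) (by omega) (by omega) hx
            have e3 : i = 0 + 1 := by omega
            rw [e3] at e1
            omega
        · obtain ⟨e1, e2⟩ := hMd _ _ _ _ _ (by omega) (by omega) (by omega) (by omega) hx
          have e3 : i = j := by omega
          rw [e3] at e1
          omega
      · exact hI _ _ le_rfl hi
  obtain ⟨Y', I', hTY, hY', hI'⟩ := hok'
  have hQ : SpQ k T (((Finset.range n).image z) ∪ I') := by
    refine ((spQ_cyc hz).union hY' ?_).mono hTY (Finset.Subset.refl _)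
    rw [Finset.disjoint_left]
    intro v hv
    obtain ⟨i, _, rfl⟩ := Finset.mem_image.1 hv
    exact hI' i
  refine polygon (P := P) (z := z) (T := T) (χ := χ) (c := c) (c' := D) (by omega) (by omega)
    hWE hWD hE hz hPz0 hPz hPi ?_ ?_ ?_ hQ hok ?_
  · intro j e he
    rcases Finset.mem_union.1 (hPe j he) with h | h
    · exact hME _ h
    · exact hME _ h
  · intro x e he
    rw [hTdef]
    apply Finset.mem_union_left
    apply hEY
    rw [Finset.mem_union]
    rcases Fin.exists_fin_two.1 ⟨x, rfl⟩ with h | h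
    · left; rw [h] at he; exact he
    · right; rw [h] at he; exact he
  · exact Finset.subset_union_right
  · right
    exact ⟨Y', I', hTY, hY', hI'⟩

def Forest (T : Finset (Sym2 V)) : Prop :=
  ∀ S : Finset V, S.Nonempty → (T ∩ S.sym2).card + 1 ≤ S.card

lemma Forest.mono {T T' : Finset (Sym2 V)} (h : Forest T) (hT : T' ⊆ T) : Forest T' := by
  intro S hS
  have : (T' ∩ S.sym2).card ≤ (T ∩ S.sym2).card := by gcongr
  have := h S hS
  omega

lemma Forest.spQ [Fintype V] {k : ℕ} {T : Finset (Sym2 V)} (h : Forest T) :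
    SpQ k T Finset.univ := by
  intro S
  rw [Finset.inter_univ]
  rcases S.eq_empty_or_nonempty with rfl | hS
  · simp
  · have := h S hS
    have h1 : (T ∩ S.sym2).card ≤ S.card := by omega
    nlinarith [Nat.mul_le_mul_left k h1]

lemma Forest.join {T : Finset (Sym2 V)} (h : Forest T) {A : Finset V} {r s : V} (hr : r ∈ A)
    (hs : s ∉ A) (hT : ∀ e ∈ T, (∀ v ∈ e, v ∈ A) ∨ (∀ v ∈ e, v ∉ A)) :
    Forest (insert s(r, s) T) := by
  intro S hS
  by_cases hrs : r ∈ S ∧ s ∈ S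
  · have h1 := h (S ∩ A) ⟨r, by simp [hr, hrs.1]⟩
    have h2 := h (S \ A) ⟨s, by simp [hs, hrs.2]⟩
    have h3 := Finset.card_inter_add_card_sdiff S A
    have h4 : insert s(r, s) T ∩ S.sym2 ⊆
        insert s(r, s) ((T ∩ (S ∩ A).sym2) ∪ (T ∩ (S \ A).sym2)) := by
      intro e he
      rw [Finset.mem_inter, Finset.mem_insert, Finset.mem_sym2_iff] at he
      rw [Finset.mem_insert, Finset.mem_union, Finset.mem_inter, Finset.mem_inter,
        Finset.mem_sym2_iff, Finset.mem_sym2_iff]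
      obtain ⟨he | he, heS⟩ := he
      · left; exact he
      · right
        rcases hT e he with h | h
        · left
          exact ⟨he, fun v hv => Finset.mem_inter.2 ⟨heS v hv, h v hv⟩⟩
        · right
          exact ⟨he, fun v hv => Finset.mem_sdiff.2 ⟨heS v hv, h v hv⟩⟩
    have h5 := Finset.card_le_card h4
    have h6 := Finset.card_insert_le s(r, s) ((T ∩ (S ∩ A).sym2) ∪ (T ∩ (S \ A).sym2))
    have h7 := Finset.card_union_le (T ∩ (S ∩ A).sym2) (T ∩ (S \ A).sym2)
    omega
  · have h1 := h S hS
    have h4 : insert s(r, s) T ∩ S.sym2 ⊆ T ∩ S.sym2 := by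
      intro e he
      rw [Finset.mem_inter, Finset.mem_insert] at he
      obtain ⟨he | he, heS⟩ := he
      · exfalso
        rw [he, Finset.mk_mem_sym2_iff] at heS
        exact hrs heS
      · exact Finset.mem_inter.2 ⟨he, heS⟩
    have h5 := Finset.card_le_card h4
    omega

def Bt (G : Finset (Sym2 V)) : ℕ → V → Finset V → Prop
  | 0, r, A => r ∈ A
  | n + 1, r, A => ∃ B C r', B ⊆ A ∧ C ⊆ A ∧ Disjoint B C ∧ s(r, r') ∈ G ∧ Bt G n r B ∧ Bt G n r' C

lemma Bt.mono {G G' : Finset (Sym2 V)} (hG : G ⊆ G') {n : ℕ} {r : V} {A A' : Finset V}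
    (hA : A ⊆ A') (h : Bt G n r A) : Bt G' n r A' := by
  induction n generalizing r A A' with
  | zero => exact hA h
  | succ n ih =>
    obtain ⟨B, C, r', hB, hC, hd, he, h1, h2⟩ := h
    exact ⟨B, C, r', hB.trans hA, hC.trans hA, hd, hG he, ih (Finset.Subset.refl _) h1,
      ih (Finset.Subset.refl _) h2⟩

lemma Bt.le {G : Finset (Sym2 V)} {n m : ℕ} {r : V} {A : Finset V} (hm : m ≤ n)
    (h : Bt G n r A) : Bt G m r A := by
  induction n with
  | zero =>
    have : m = 0 := by omega
    subst this; exact h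
  | succ n ih =>
    by_cases hmn : m = n + 1
    · subst hmn; exact h
    · obtain ⟨B, C, r', hB, hC, hd, he, h1, h2⟩ := h
      exact ih (by omega) (h1.mono (Finset.Subset.refl _) hB)

lemma Bt.root {G : Finset (Sym2 V)} {n : ℕ} {r : V} {A : Finset V}
    (h : Bt G n r A) : r ∈ A := h.le (Nat.zero_le n)

lemma Bt.path {G : Finset (Sym2 V)} {n : ℕ} {r : V} {A : Finset V} (h : Bt G n r A) :
    ∃ a : ℕ → V, a 0 = r ∧ (∀ i ≤ n, a i ∈ A) ∧ (∀ i ≤ n, ∀ j ≤ n, a i = a j → i = j) ∧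
      ∀ i < n, s(a i, a (i + 1)) ∈ G := by
  induction n generalizing r A with
  | zero => exact ⟨fun _ => r, rfl, fun _ _ => h, fun i hi j hj _ => by omega, fun i hi => by omega⟩
  | succ n ih =>
    obtain ⟨B, C, r', hB, hC, hd, he, h1, h2⟩ := h
    obtain ⟨b, hb0, hbC, hbi, hbe⟩ := ih h2
    have hrC : r ∉ C := Finset.disjoint_left.1 hd h1.root
    refine ⟨fun i => Nat.casesOn i r b, rfl, ?_, ?_, ?_⟩
    · intro i hi
      cases i with
      | zero => exact hB h1.root
      | succ i => exact hC (hbC i (by omega))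
    · intro i hi j hj hij
      cases i with
      | zero =>
        cases j with
        | zero => rfl
        | succ j =>
          have hij' : r = b j := hij
          exact absurd (hij' ▸ hbC j (by omega)) hrC
      | succ i =>
        cases j with
        | zero =>
          have hij' : b i = r := hij
          exact absurd (hij' ▸ hbC i (by omega)) hrC
        | succ j => rw [hbi i (by omega) j (by omega) hij]
    · intro i hi
      cases i with
      | zero =>
        change s(r, b 0) ∈ G
        rw [hb0]; exact he
      | succ i => exact hbe i (by omega)

lemma Bt.legs {G : Finset (Sym2 V)} {Q K : ℕ} {r : V} {A : Finset V} (h : Bt G (Q + K) r A) :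
    ∃ L : ℕ → ℕ → V, (∀ j, L j 0 = r) ∧ (∀ j < K, ∀ i ≤ Q + 1, L j i ∈ A) ∧
      (∀ j < K, ∀ j' < K, ∀ i ≤ Q + 1, ∀ i' ≤ Q + 1, L j i = L j' i' →
        i = i' ∧ (i = 0 ∨ j = j')) ∧
      ∀ j < K, ∀ i < Q + 1, s(L j i, L j (i + 1)) ∈ G := by
  induction K generalizing A with
  | zero => exact ⟨fun _ _ => r, fun _ => rfl, fun j hj => by omega, fun j hj => by omega,
      fun j hj => by omega⟩
  | succ K ih =>
    obtain ⟨B, C, r', hB, hC, hd, he, h1, h2⟩ := h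
    obtain ⟨L, hL0, hLB, hLi, hLe⟩ := ih h1
    obtain ⟨b, hb0, hbC, hbi, hbe⟩ := (h2.le (show Q ≤ Q + K by omega)).path
    have hrB : r ∈ B := h1.root
    have hBC : ∀ v, v ∈ B → v ∈ C → False := fun v h h' => Finset.disjoint_left.1 hd h h'
    set b' : ℕ → V := fun i => Nat.casesOn i r b with hb'
    have b0 : b' 0 = r := rfl
    have bs : ∀ i, b' (i + 1) = b i := fun i => rfl
    have key : ∀ j < K, ∀ i ≤ Q + 1, ∀ i' ≤ Q + 1, L j i = b' i' → i = 0 ∧ i' = 0 := by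
      intro j hj i hi i' hi' h
      cases i' with
      | zero =>
        rw [b0, ← hL0 j] at h
        have := hLi j hj j hj i hi 0 (by omega) h
        omega
      | succ i' =>
        rw [bs] at h
        exact (hBC (b i') (h ▸ hLB j hj i hi) (hbC i' (by omega))).elim
    refine ⟨fun j => if j = K then b' else L j, ?_, ?_, ?_, ?_⟩
    · intro j
      dsimp only
      split_ifs
      · rfl
      · exact hL0 j
    · intro j hj i hi
      dsimp only
      split_ifs
      · cases i with
        | zero => exact hB hrB
        | succ i => exact hC (hbC i (by omega))
      · exact hB (hLB j (by omega) i hi)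
    · intro j hj j' hj' i hi i' hi' h
      dsimp only at h
      split_ifs at h with c1 c2 c2
      · refine ⟨?_, by omega⟩
        cases i with
        | zero =>
          cases i' with
          | zero => rfl
          | succ i' =>
            rw [b0, bs] at h
            exact (hBC r hrB (h ▸ hbC i' (by omega))).elim
        | succ i =>
          cases i' with
          | zero =>
            rw [b0, bs] at h
            exact (hBC r hrB (h ▸ hbC i (by omega))).elim
          | succ i' =>
            rw [bs, bs] at h
            rw [hbi i (by omega) i' (by omega) h]
      · have := key j' (by omega) i' hi' i hi h.symm
        omega
      · have := key j (by omega) i hi i' hi' h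
        omega
      · exact hLi j (by omega) j' (by omega) i hi i' hi' h
    · intro j hj i hi
      dsimp only
      split_ifs
      · cases i with
        | zero => rw [b0, bs, hb0]; exact he
        | succ i => exact hbe i (by omega)
      · exact hLe j (by omega) i hi

lemma force [Fintype V] {π : PainterStrategy V 2} {k : ℕ} (hk : 1 ≤ k) (n : ℕ) :
    ∀ (A : Finset V) (E : Fin 2 → Finset (Sym2 V)), 2 ^ n ≤ A.card → RG π k E →
      (∀ e ∈ E 0 ∪ E 1, ∀ v ∈ e, v ∉ A) → Forest (E 0 ∪ E 1) →
      ∃ E' : Fin 2 → Finset (Sym2 V), (∀ c, E c ⊆ E' c) ∧ RG π k E' ∧ Forest (E' 0 ∪ E' 1) ∧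
        (∀ e ∈ E' 0 ∪ E' 1, e ∈ E 0 ∪ E 1 ∨ ∀ v ∈ e, v ∈ A) ∧
        ∃ r ∈ A, ∃ i j, n ≤ i + j ∧ Bt (E' 0) i r A ∧ Bt (E' 1) j r A := by
  induction n with
  | zero =>
    intro A E hA hE _ hF
    have : 0 < A.card := by simpa using hA
    obtain ⟨r, hr⟩ := Finset.card_pos.1 this
    exact ⟨E, fun _ => Finset.Subset.refl _, hE, hF, fun e he => Or.inl he, r, hr, 0, 0, le_rfl,
      hr, hr⟩
  | succ n ih =>
    intro A E hA hE hav hF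
    obtain ⟨A1, hA1, hc1⟩ := Finset.exists_subset_card_eq (s := A) (n := 2 ^ n)
      (by rw [pow_succ] at hA; omega)
    have hc2 : 2 ^ n ≤ (A \ A1).card := by
      rw [Finset.card_sdiff_of_subset hA1, hc1]
      rw [pow_succ] at hA; omega
    set A2 := A \ A1 with hA2
    have hA2A : A2 ⊆ A := Finset.sdiff_subset
    have hd : Disjoint A1 A2 := Finset.disjoint_sdiff
    obtain ⟨E1, hEE1, hE1, hF1, hav1, r1, hr1, i1, j1, hij1, hb1, hb1'⟩ :=
      ih A1 E hc1.ge hE (fun e he v hv hvA => hav e he v hv (hA1 hvA)) hF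
    obtain ⟨E2, hEE2, hE2, hF2, hav2, r2, hr2, i2, j2, hij2, hb2, hb2'⟩ :=
      ih A2 E1 hc2 hE1 (by
        intro e he v hv hvA
        rcases hav1 e he with h | h
        · exact hav e h v hv (hA2A hvA)
        · exact Finset.disjoint_left.1 hd (h v hv) hvA) hF1
    have hr2' : r2 ∉ A1 := fun h => Finset.disjoint_left.1 hd h hr2
    have hF3 : Forest (insert s(r1, r2) (E2 0 ∪ E2 1)) := by
      apply hF2.join hr1 hr2'
      intro e he
      rcases hav2 e he with h | h
      · rcases hav1 e h with h | h
        · right; intro v hv hvA; exact hav e h v hv (hA1 hvA)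
        · left; exact h
      · right; intro v hv hvA; exact Finset.disjoint_left.1 hd hvA (h v hv)
    obtain ⟨E3, c, hE3, hEE3, hec, hE3s⟩ := hE2.step hk s(r1, r2)
      (by rw [Sym2.mk_isDiag_iff]; rintro rfl; exact hr2' hr1)
      (hF3.spQ (k := k)) (by
        intro c
        refine Finset.Subset.trans ?_ (Finset.subset_insert _ _)
        fin_cases c
        · exact Finset.subset_union_left
        · exact Finset.subset_union_right) (Finset.mem_insert_self _ _)
    have ht3 : E3 0 ∪ E3 1 ⊆ insert s(r1, r2) (E2 0 ∪ E2 1) :=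
      Finset.union_subset (hE3s 0) (hE3s 1)
    have hR := Finset.Subset.refl A1
    have hR' := Finset.Subset.refl A2
    have m1 := hb1.mono ((hEE2 0).trans (hEE3 0)) hR
    have m1' := hb1'.mono ((hEE2 1).trans (hEE3 1)) hR
    have m2 := hb2.mono (hEE3 0) hR'
    have m2' := hb2'.mono (hEE3 1) hR'
    refine ⟨E3, fun c => ((hEE1 c).trans (hEE2 c)).trans (hEE3 c), hE3, hF3.mono ht3, ?_, ?_⟩
    · intro e he
      rcases Finset.mem_insert.1 (ht3 he) with h | h
      · right
        intro v hv
        rw [h, Sym2.mem_iff] at hv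
        rcases hv with rfl | rfl
        · exact hA1 hr1
        · exact hA2A hr2
      · rcases hav2 e h with h | h
        · rcases hav1 e h with h | h
          · left; exact h
          · right; intro v hv; exact hA1 (h v hv)
        · right; intro v hv; exact hA2A (h v hv)
    · have hec' : s(r2, r1) ∈ E3 c := by rw [Sym2.eq_swap]; exact hec
      rcases Fin.exists_fin_two.1 ⟨c, rfl⟩ with h | h
      · rw [h] at hec hec'
        rcases le_total i1 i2 with hle | hle
        · exact ⟨r1, hA1 hr1, i1 + 1, j1, by omega,
            ⟨A1, A2, r2, hA1, hA2A, hd, hec, m1, m2.le hle⟩,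
            m1'.mono (Finset.Subset.refl _) hA1⟩
        · exact ⟨r2, hA2A hr2, i2 + 1, j2, by omega,
            ⟨A2, A1, r1, hA2A, hA1, hd.symm, hec', m2, m1.le hle⟩,
            m2'.mono (Finset.Subset.refl _) hA2A⟩
      · rw [h] at hec hec'
        rcases le_total j1 j2 with hle | hle
        · exact ⟨r1, hA1 hr1, i1, j1 + 1, by omega,
            m1.mono (Finset.Subset.refl _) hA1,
            ⟨A1, A2, r2, hA1, hA2A, hd, hec, m1', m2'.le hle⟩⟩
        · exact ⟨r2, hA2A hr2, i2, j2 + 1, by omega,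
            m2.mono (Finset.Subset.refl _) hA2A,
            ⟨A2, A1, r1, hA2A, hA1, hd.symm, hec', m2', m1'.le hle⟩⟩

lemma spider_goal [Fintype V] {π : PainterStrategy V 2} {k D m : ℕ} (hk : 2 ≤ k)
    (hD : k + 1 ≤ D) (hD2 : D % 2 = 1) (hm : k + 1 ≤ m) (hWD : Win π k D)
    (hWE : Win π k (2 * m + 1)) {E : Fin 2 → Finset (Sym2 V)} {χ : Fin 2} (hE : RG π k E)
    (hF : Forest (E 0 ∪ E 1)) {r : V} {A : Finset V} (hB : Bt (E χ) (m + (D + 1)) r A) :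
    Goal π k := by
  obtain ⟨L, hL0, -, hLi, hLe⟩ := hB.legs
  set H : ℕ → ℕ := fun j => if j % 2 = 0 then m else m + 1 with hH
  have hHm : ∀ j, m ≤ H j ∧ H j ≤ m + 1 := by intro j; simp only [hH]; split_ifs <;> omega
  have hHper : ∀ j, H (j % (D + 1)) = H j := by
    intro j
    have h2 : 2 ∣ D + 1 := by omega
    simp only [hH]
    rw [Nat.mod_mod_of_dvd j h2]
  set M : ℕ → ℕ → V := fun j => L (j % (D + 1)) with hMdef
  have hlt : ∀ j, j % (D + 1) < D + 1 := fun j => Nat.mod_lt _ (by omega)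
  have hM : ∀ j j' i i', i ≤ m + 1 → i' ≤ m + 1 → M j i = M j' i' →
      i = i' ∧ (i = 0 ∨ j % (D + 1) = j' % (D + 1)) := by
    intro j j' i i' hi hi' h
    exact hLi _ (hlt j) _ (hlt j') i hi i' hi' h
  have hME : ∀ j, earE (H j) (M j) ⊆ E χ := by
    intro j e he
    obtain ⟨i, hi, rfl⟩ := mem_earE.1 he
    have := hHm j
    exact hLe _ (hlt j) i (by omega)
  set SE := (Finset.range (D + 1)).biUnion fun j => earE (H j) (M j) with hSE
  set W := (Finset.range (D + 1)).biUnion fun j => (Finset.range (H j + 1)).image (M j) with hW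
  set idx := (Finset.range (D + 1)).sigma fun j => Finset.range (H j) with hidx
  have hWr : r ∈ W := by
    rw [hW, Finset.mem_biUnion]
    exact ⟨0, by simp, Finset.mem_image.2 ⟨0, by simp, hL0 _⟩⟩
  have hcW : W.card ≤ idx.card + 1 := by
    have h1 : W ⊆ insert r (idx.image fun x => M x.1 (x.2 + 1)) := by
      intro v hv
      rw [hW, Finset.mem_biUnion] at hv
      obtain ⟨j, hj, hv⟩ := hv
      obtain ⟨i, hi, rfl⟩ := Finset.mem_image.1 hv
      rw [Finset.mem_range] at hi
      rw [Finset.mem_insert]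
      cases i with
      | zero => left; exact hL0 _
      | succ i =>
        right
        refine Finset.mem_image.2 ⟨⟨j, i⟩, ?_, rfl⟩
        rw [hidx, Finset.mem_sigma]
        exact ⟨hj, Finset.mem_range.2 (by dsimp only; omega)⟩
    refine (Finset.card_le_card h1).trans ((Finset.card_insert_le _ _).trans ?_)
    have := Finset.card_image_le (s := idx) (f := fun x => M x.1 (x.2 + 1))
    omega
  have hcS : idx.card ≤ SE.card := by
    apply Finset.card_le_card_of_injOn (fun x => s(M x.1 x.2, M x.1 (x.2 + 1)))
    · rintro ⟨j, i⟩ hx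
      rw [Finset.mem_coe, hidx, Finset.mem_sigma] at hx
      rw [Finset.mem_coe, hSE, Finset.mem_biUnion]
      exact ⟨j, hx.1, mem_earE.2 ⟨i, Finset.mem_range.1 hx.2, rfl⟩⟩
    · rintro ⟨j, i⟩ hx ⟨j', i'⟩ hx' h
      rw [Finset.mem_coe, hidx, Finset.mem_sigma, Finset.mem_range, Finset.mem_range] at hx hx'
      dsimp only at hx hx' h
      have a1 := hHm j
      have a2 := hHm j'
      rw [Sym2.eq_iff] at h
      rcases h with ⟨_, h⟩ | ⟨h, h'⟩
      · obtain ⟨h1, h2⟩ := hM _ _ _ _ (by omega) (by omega) h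
        rw [Nat.mod_eq_of_lt hx.1, Nat.mod_eq_of_lt hx'.1] at h2
        have e1 : i = i' := by omega
        have e2 : j = j' := by omega
        subst e1; subst e2; rfl
      · have h1 := (hM _ _ _ _ (by omega) (by omega) h).1
        have h2 := (hM _ _ _ _ (by omega) (by omega) h').1
        omega
  have hSEW : SE ⊆ (E 0 ∪ E 1) ∩ W.sym2 := by
    intro e he
    rw [hSE, Finset.mem_biUnion] at he
    obtain ⟨j, hj, he⟩ := he
    rw [Finset.mem_inter]
    refine ⟨?_, ?_⟩
    · have := hME j he
      rw [Finset.mem_union]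
      rcases Fin.exists_fin_two.1 ⟨χ, rfl⟩ with h | h
      · left; rw [h] at this; exact this
      · right; rw [h] at this; exact this
    · obtain ⟨i, hi, rfl⟩ := mem_earE.1 he
      rw [Finset.mk_mem_sym2_iff, hW, Finset.mem_biUnion, Finset.mem_biUnion]
      exact ⟨⟨j, hj, Finset.mem_image.2 ⟨i, by simp; omega, rfl⟩⟩,
        ⟨j, hj, Finset.mem_image.2 ⟨i + 1, by simp; omega, rfl⟩⟩⟩
  have hY : SpQ k ((E 0 ∪ E 1) \ SE) (Finset.univ \ W) := by
    intro S
    have key : (((E 0 ∪ E 1) \ SE) ∩ S.sym2).card ≤ (S ∩ (Finset.univ \ W)).card := by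
      have h1 := hF (S ∪ W) ⟨r, Finset.mem_union_right _ hWr⟩
      have h2 : (((E 0 ∪ E 1) \ SE) ∩ S.sym2) ∪ SE ⊆ (E 0 ∪ E 1) ∩ (S ∪ W).sym2 := by
        apply Finset.union_subset
        · intro e he
          rw [Finset.mem_inter, Finset.mem_sdiff] at he
          exact Finset.mem_inter.2 ⟨he.1.1,
            Finset.sym2_mono Finset.subset_union_left he.2⟩
        · intro e he
          have := hSEW he
          rw [Finset.mem_inter] at this
          exact Finset.mem_inter.2 ⟨this.1, Finset.sym2_mono Finset.subset_union_right this.2⟩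
      have h3 := Finset.card_le_card h2
      rw [Finset.card_union_of_disjoint] at h3
      · have h4 : S ∪ W = (S ∩ (Finset.univ \ W)) ∪ W := by
          ext v; simp; tauto
        have h5 := Finset.card_union_le (S ∩ (Finset.univ \ W)) W
        rw [← h4] at h5
        omega
      · rw [Finset.disjoint_left]
        intro e he he'
        rw [Finset.mem_inter, Finset.mem_sdiff] at he
        exact he.1.2 he'
    nlinarith [Nat.mul_le_mul_left k key]
  refine spider hk hD hD2 hm hWD hWE hE (M := M) (r := r) (H := H) (fun j => rfl) ?_
    (fun j => hL0 _) hM hME hY ?_ ?_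
  · intro j j' i h
    simp only [hMdef]; rw [h]
  · intro e he
    by_cases h : e ∈ SE
    · exact Finset.mem_union_left _ h
    · exact Finset.mem_union_right _ (Finset.mem_sdiff.2 ⟨he, h⟩)
  · intro j i hi h
    rw [Finset.mem_sdiff] at h
    apply h.2
    rw [hW, Finset.mem_biUnion]
    refine ⟨j % (D + 1), Finset.mem_range.2 (hlt j), Finset.mem_image.2 ⟨i, ?_, ?_⟩⟩
    · rw [hHper, Finset.mem_range]; omega
    · simp only [hMdef, Nat.mod_mod]

lemma goal_exists {k : ℕ} (hk : 2 ≤ k) :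
    ∃ a : ℕ, ∀ π : PainterStrategy (Fin a) 2, Goal π k := by
  have hkk : Even (k * (k + 1)) := Nat.even_mul_succ_self k
  obtain ⟨D, hD⟩ : ∃ D, D + 1 = k * (k + 1) := ⟨k * (k + 1) - 1, by
    have : 0 < k * (k + 1) := by positivity
    omega⟩
  have hDk : k + 1 ≤ D := by nlinarith
  have hD2 : D % 2 = 1 := by
    rw [← hD] at hkk
    obtain ⟨x, hx⟩ := hkk
    omega
  have hDD : Even (D * (D + 1)) := Nat.even_mul_succ_self D
  obtain ⟨m, hm⟩ : ∃ m, 2 * m + 1 + 1 = D * (D + 1) := by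
    obtain ⟨x, hx⟩ := hDD
    have : 0 < D * (D + 1) := Nat.mul_pos (by omega) (by omega)
    exact ⟨x - 1, by omega⟩
  have hmk : k + 1 ≤ m := by nlinarith
  refine ⟨2 ^ (2 * (m + (D + 1))), fun π => ?_⟩
  have w1 : Win π k D := win_step hk (Or.inl rfl) (win_base π k) hD
  have w2 : Win π k (2 * m + 1) := win_step hk (Or.inr hDk) w1 hm
  have h0 : RG π k (fun _ => ∅) := by
    refine ⟨[], ⟨List.nodup_nil, by simp⟩, ?_, ?_⟩
    · intro i
      exact density_of_spQ (by omega) (SpQ.empty k ∅) _ (by simp)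
    · intro e χ
      simp [runPainter, runPainterAux]
  obtain ⟨E, -, hE, hF, -, r, -, i, j, hij, hb0, hb1⟩ :=
    force (π := π) (k := k) (by omega) (2 * (m + (D + 1))) Finset.univ (fun _ => ∅)
      (by simp) h0 (by simp) (by intro S hS; simpa using hS.card_pos)
  by_cases h : m + (D + 1) ≤ i
  · exact spider_goal hk hDk hD2 hmk w1 w2 hE hF (χ := 0) (hb0.le h)
  · exact spider_goal hk hDk hD2 hmk w1 w2 hE hF (χ := 1) (hb1.le (by omega))

lemma goal_copy {π : PainterStrategy V 2} {k : ℕ} (hk : 2 ≤ k) (h : Goal π k) :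
    ∃ l : List (Sym2 V), ValidEdgeSeq l ∧ (∀ i : ℕ, DensityLE (boardOf (l.take i)) (dens k)) ∧
      HasMonoCopy (SimpleGraph.cycleGraph (k + 1)) (runPainter π l) := by
  obtain ⟨E, χ, p, ⟨l, h1, h2, h3⟩, hp, hpE⟩ := h
  have hinj : Function.Injective (fun u : Fin (k + 1) => p u.val) := by
    intro u v h
    apply Fin.ext
    exact hp.inj (b := 0) u.2 v.2 (by simpa using h)
  refine ⟨l, h1, h2, χ, ⟨fun u => p u.val, hinj⟩, ?_⟩
  intro u v huv
  rw [colorGraph, SimpleGraph.fromEdgeSet_adj]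
  refine ⟨?_, fun e => huv.ne (hinj e)⟩
  have key : ∀ u v : Fin (k + 1), (v - u).val = 1 → s(p u.val, p v.val) ∈ E χ := by
    intro u v h
    have : p v.val = p (u.val + 1) := by
      rw [hp]
      have : v = u + (v - u) := by abel
      conv_lhs => rw [this, Fin.val_add, h]
      simp
    rw [this]
    exact hpE (hp.mem_earE (by omega) _)
  change (s(p u.val, p v.val), χ) ∈ runPainter π l
  rw [h3]
  rcases SimpleGraph.cycleGraph_adj'.1 huv with h | h
  · rw [Sym2.eq_swap]; exact key v u h
  · exact key u v h

end CycleGame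

/-- deterministic part of Theorem 3. For every `ℓ ≥ 3`, Builder has a
winning strategy in the deterministic `C_ℓ`-avoidance game with 2 colors and density
restriction `d = ℓ/(ℓ-1)`. -/
theorem statement8 (ℓ : ℕ) (hℓ : 3 ≤ ℓ) :
    BuilderWinsDensity (SimpleGraph.cycleGraph ℓ) 2 ((ℓ : ℝ) / ((ℓ : ℝ) - 1)) := by
  obtain ⟨k, rfl⟩ : ∃ k, ℓ = k + 1 := ⟨ℓ - 1, by omega⟩
  obtain ⟨a, ha⟩ := goal_exists (k := k) (by omega)
  exact ⟨a, fun π => goal_copy (by omega) (ha π)⟩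
end
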